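/- arXiv:1411.7425 — 2 statements merged into one kernel-verified Lean document; each statement's English description precedes it below -/
import Mathlib

section
/- Fix n ≥ 1 and integers a, b, y with 1 ≤ y such that the contiguous minor CM_{a,b,y} has disjoint row and column index sets, i.e. the sets {a, a+1, …, a+y−1} and {b, b+1, …, b+y−1} taken modulo n are disjoint. Then CM_{a,b,y}(M) is a positive-coefficient Laurent polynomial in the small central minors of M: there exist a finitely supported function e from the small-central-minor index set S = {(x,y') : 1 ≤ x ≤ 2n, and either 1 ≤ y' < n/2, or y' = n/2 and x+y' is odd} to ℕ and a multivariate real polynomial p in variables (X_s)_{s∈S} with all coefficients nonnegative, such that for every n×n real matrix M one has CM_{a,b,y}(M) · ∏_{s∈S} CM_s(M)^{e(s)} = p((CM_s(M))_{s∈S}). -/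
/-- The contiguous minor `CM_{a,b,y}(M)` of an `n × n` matrix `M` (indexed by `ZMod n`,
i.e. indices are taken modulo `n`): the determinant of the `y × y` matrix whose rows are
`a, a+1, …, a+y-1` in order and whose columns are `b+y-1, …, b+1, b` in order. -/
noncomputable def contiguousMinor (n : ℕ) (M : Matrix (ZMod n) (ZMod n) ℝ)
    (a b : ℤ) (y : ℕ) : ℝ :=
  Matrix.det (Matrix.of fun i j : Fin y =>
    M (((a + (i : ℤ)) : ℤ) : ZMod n) (((b + (y : ℤ) - 1 - (j : ℤ)) : ℤ) : ZMod n))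

/-- The central minor `CM_{x,y}(M)`: the contiguous minor `CM_{a,b,y}(M)` with
`a = ⌊(x-y)/2⌋` and `b = ⌊(x-y+n-((n-1) mod 2))/2⌋`. -/
noncomputable def centralMinor (n : ℕ) (M : Matrix (ZMod n) (ZMod n) ℝ)
    (x : ℤ) (y : ℕ) : ℝ :=
  contiguousMinor n M (Int.fdiv (x - (y : ℤ)) 2)
    (Int.fdiv (x - (y : ℤ) + (n : ℤ) - (((n : ℤ) - 1) % 2)) 2) y

/-- The index set of the small central minors: pairs `(x,y)` with `1 ≤ x ≤ 2n` and
either `1 ≤ y < n/2`, or `y = n/2` and `x + y` odd. -/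
def SmallIdx (n : ℕ) : Set (ℤ × ℕ) :=
  {s | 1 ≤ s.1 ∧ s.1 ≤ 2 * (n : ℤ) ∧
    ((1 ≤ s.2 ∧ 2 * s.2 < n) ∨ (2 * s.2 = n ∧ Odd (s.1 + (s.2 : ℤ))))}

/-!
Consider a minor of `M` on the rows `0, 1, …` and some columns of a window whose diagonal and
subdiagonal contiguous minors are small central minors. Replace the rows of the window by the values
of difference operators of orders `0, 1, …`, the operator of order `k` annihilating the first `k`
columns. On rows this is a triangular change of basis whose diagonal entries are small central
minors up to sign, so it is harmless to Laurent positivity. The minors of the new matrix are all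
Laurent polynomials with nonnegative coefficients: by induction on the size of the window, the
matrices for consecutive base points differ by one new row or column with a single nonzero entry and
by row operations which add to a multiple of a row a multiple of an adjacent row. The coefficients
of these operations are small central minors, with no signs, because of the Plücker relation when
the base column moves and the Dodgson relation when the base row moves. A window and its transpose
cover all contiguous minors with disjoint rows and columns.
-/

open Matrix NNReal

section DivisorSubmonoid

variable {R : Type*} [CommSemiring R]

/-- The elements of `P` by which one may divide inside `P`. -/
def divisorSubmonoid (P : Subsemiring R) : Submonoid R where
  carrier := {c | c ∈ P ∧ ∀ g, g * c ∈ P → g ∈ P}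
  one_mem' := ⟨P.one_mem, fun g hg => by rwa [mul_one] at hg⟩
  mul_mem' := fun hc hd =>
    ⟨P.mul_mem hc.1 hd.1, fun g hg => hc.2 g (hd.2 _ (by rwa [mul_assoc]))⟩

end DivisorSubmonoid

section Laurent

variable {σ K A : Type*} [CommSemiring K] [CommSemiring A] [Algebra K A]

variable (K) in
/-- The Laurent polynomials in the family `x` with coefficients in `K`. The `x s` need not be
invertible in `A`, so a denominator is cleared rather than inverted. -/
def laurentSubalgebra (x : σ → A) : Subalgebra K A where
  carrier := {g | ∃ (e : σ →₀ ℕ) (p : MvPolynomial σ K),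
    g * e.prod (fun s k => x s ^ k) = MvPolynomial.aeval x p}
  mul_mem' := by
    rintro g g' ⟨e, p, h⟩ ⟨e', p', h'⟩
    refine ⟨e + e', p * p', ?_⟩
    rw [Finsupp.prod_add_index' (by simp) (fun _ _ _ => pow_add _ _ _), map_mul, ← h, ← h']
    ring
  add_mem' := by
    rintro g g' ⟨e, p, h⟩ ⟨e', p', h'⟩
    refine ⟨e + e', p * .monomial e' 1 + p' * .monomial e 1, ?_⟩
    rw [Finsupp.prod_add_index' (by simp) (fun _ _ _ => pow_add _ _ _), map_add, map_mul, map_mul,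
      ← h, ← h', MvPolynomial.aeval_monomial, MvPolynomial.aeval_monomial, map_one]
    ring
  algebraMap_mem' r := ⟨0, .C r, by simp⟩

theorem mem_divisorSubmonoid_laurentSubalgebra (x : σ → A) (s : σ) :
    x s ∈ divisorSubmonoid (laurentSubalgebra K x).toSubsemiring := by
  refine ⟨⟨0, .X s, by simp⟩, ?_⟩
  rintro g ⟨e, p, h⟩
  refine ⟨e + Finsupp.single s 1, p, ?_⟩
  rw [Finsupp.prod_add_index' (by simp) (fun _ _ _ => pow_add _ _ _),
    Finsupp.prod_single_index (h := fun s k => x s ^ k) (pow_zero _), pow_one, ← h]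
  ring

end Laurent

section Determinants

variable {R : Type*} [CommRing R]

theorem det_eq_mul_det_submatrix_of_row {n : ℕ} {A : Matrix (Fin (n + 1)) (Fin (n + 1)) R}
    {p q : Fin (n + 1)} (h : ∀ j ≠ q, A p j = 0) :
    A.det = (-1) ^ (p + q : ℕ) * A p q * (A.submatrix p.succAbove q.succAbove).det := by
  rw [det_succ_row A p, Finset.sum_eq_single q (fun j _ hj => by simp [h j hj]) (by simp)]

theorem sign_revPerm (n : ℕ) :
    Equiv.Perm.sign (Fin.revPerm : Equiv.Perm (Fin n)) = ∏ j : Fin n, (-1) ^ (j : ℕ) := by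
  rw [Equiv.Perm.sign_eq_prod_prod_Iio]
  refine Finset.prod_congr rfl fun j _ => ?_
  rw [Finset.prod_congr rfl fun i hi => if_neg (by simpa using (Finset.mem_Iio.1 hi).le)]
  simp

end Determinants

section SpliceRows

variable {κ α : Type*} {u v : Matrix ℕ κ α} {r i : ℕ} {j : κ}

/-- The matrix with the rows of `u` before row `r` and the rows of `v` from row `r` on. -/
def spliceRows (u v : Matrix ℕ κ α) (r : ℕ) : Matrix ℕ κ α :=
  of fun i j => if i < r then u i j else v i j

theorem spliceRows_of_lt (h : i < r) : spliceRows u v r i j = u i j :=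
  if_pos h

theorem spliceRows_of_le (h : r ≤ i) : spliceRows u v r i j = v i j :=
  if_neg h.not_gt

end SpliceRows

section TotallyNonneg

variable {ι κ R : Type*} [LinearOrder ι] [LinearOrder κ] [CommRing R]
  {P : Subsemiring R} {A B : Matrix ι κ R} {S : Set ι} {T : Set κ}

/-- Every minor of `A` with rows in `S` and columns in `T` lies in `P`. When `P` is the set of
nonnegative reals this is total nonnegativity of that block of `A`. -/
def IsTotallyNonnegOn (P : Subsemiring R) (A : Matrix ι κ R) (S : Set ι) (T : Set κ) : Prop :=
  ∀ ⦃k : ℕ⦄ ⦃s : Fin k → ι⦄ ⦃t : Fin k → κ⦄, StrictMono s → StrictMono t →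
    (∀ i, s i ∈ S) → (∀ j, t j ∈ T) → (A.submatrix s t).det ∈ P

namespace IsTotallyNonnegOn

theorem of_rows_empty : IsTotallyNonnegOn P A ∅ T := by
  rintro (_ | k) s t - - hs -
  · simp
  · exact (hs 0).elim

theorem congr (hA : IsTotallyNonnegOn P A S T) (h : ∀ i ∈ S, ∀ j ∈ T, A i j = B i j) :
    IsTotallyNonnegOn P B S T := by
  intro k s t hs ht hsS htT
  convert hA hs ht hsS htT using 2
  ext i j
  exact (h _ (hsS i) _ (htT j)).symm

theorem transpose_dual (hA : IsTotallyNonnegOn P A S T) :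
    IsTotallyNonnegOn P (Aᵀ.submatrix OrderDual.ofDual OrderDual.ofDual)
      (OrderDual.ofDual ⁻¹' T) (OrderDual.ofDual ⁻¹' S) := by
  intro k t s ht hs htT hsS
  rw [← det_transpose, ← det_submatrix_equiv_self Fin.revPerm]
  exact hA (fun _ _ h => hs (Fin.rev_lt_rev.2 h)) (fun _ _ h => ht (Fin.rev_lt_rev.2 h))
    (fun i => hsS _) (fun i => htT _)

theorem insert_row {r : ι} {c : κ} (hA : IsTotallyNonnegOn P A S T) (hS : ∀ i ∈ S, i < r)
    (hT : ∀ j ∈ T, j ≤ c) (hzero : ∀ j ∈ T, j ≠ c → A r j = 0) (hpos : A r c ∈ P) :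
    IsTotallyNonnegOn P A (insert r S) T := by
  intro k s t hs ht hsS htT
  by_cases hall : ∀ i, s i ∈ S
  · exact hA hs ht hall htT
  obtain ⟨i₀, hi₀⟩ := not_forall.1 hall
  obtain ⟨k, rfl⟩ := Nat.exists_eq_add_one.2 i₀.pos
  have hinit : ∀ i : Fin k, s i.castSucc ∈ S := fun i => (hsS _).resolve_left fun hi =>
    (hs (Fin.castSucc_lt_last i)).not_ge <| hi ▸
      (hsS (Fin.last k)).elim le_of_eq fun h => (hS _ h).le
  have hlast : s (Fin.last k) = r := by
    induction i₀ using Fin.lastCases with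
    | last => exact (hsS _).resolve_right hi₀
    | cast i => exact absurd (hinit i) hi₀
  have hrow : ∀ j ≠ Fin.last k, A.submatrix s t (Fin.last k) j = 0 := fun j hj => by
    rw [submatrix_apply, hlast]
    exact hzero _ (htT j) ((ht (Fin.lt_last_iff_ne_last.2 hj)).trans_le (hT _ (htT _))).ne
  rw [det_eq_mul_det_submatrix_of_row hrow, Even.neg_one_pow ⟨_, rfl⟩, one_mul]
  refine P.mul_mem ?_ ?_
  · rw [submatrix_apply, hlast]
    by_cases hc : t (Fin.last k) = c
    · exact hc ▸ hpos
    · exact hzero _ (htT _) hc ▸ P.zero_mem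
  · simp only [Fin.succAbove_last]
    exact hA (hs.comp Fin.strictMono_castSucc) (ht.comp Fin.strictMono_castSucc) hinit
      fun j => htT _

theorem insert_col {r : ι} {c : κ} (hA : IsTotallyNonnegOn P A S T) (hT : ∀ j ∈ T, c < j)
    (hS : ∀ i ∈ S, r ≤ i) (hzero : ∀ i ∈ S, i ≠ r → A i c = 0) (hpos : A r c ∈ P) :
    IsTotallyNonnegOn P A S (insert c T) :=
  (hA.transpose_dual.insert_row (r := OrderDual.toDual c) (c := OrderDual.toDual r)
    hT hS hzero hpos).transpose_dual

/-- Once row `r` of a `k`-rowed selection is replaced by its neighbour `r'`, the selection is still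
monotone, and it either stays injective or acquires a repeated row. -/
theorem det_updateRow_mem {k : ℕ} {s : Fin k → ι} {t : Fin k → κ} {r' : ι} {i₀ : Fin k}
    (hA : IsTotallyNonnegOn P A S T) (hs : StrictMono s) (ht : StrictMono t)
    (hsS : ∀ i, s i ∈ S) (htT : ∀ j, t j ∈ T) (hr' : r' ∈ S)
    (hadj : s i₀ ⋖ r' ∨ r' ⋖ s i₀) :
    ((A.submatrix s t).updateRow i₀ fun j => A r' (t j)).det ∈ P := by
  have hupdate : ((A.submatrix s t).updateRow i₀ fun j => A r' (t j)) =
      A.submatrix (Function.update s i₀ r') t := by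
    ext i j
    by_cases hi : i = i₀ <;> simp [updateRow_apply, hi]
  have hbelow : ∀ i < i₀, s i ≤ r' := fun i hi =>
    hadj.elim (fun h => ((hs hi).trans h.lt).le) fun h => h.le_of_lt (hs hi)
  have habove : ∀ i, i₀ < i → r' ≤ s i := fun i hi =>
    hadj.elim (fun h => h.ge_of_gt (hs hi)) fun h => (h.lt.trans (hs hi)).le
  have hmono : Monotone (Function.update s i₀ r') := by
    refine monotone_iff_forall_lt.2 fun i j hij => ?_
    rcases eq_or_ne i i₀ with rfl | hi
    · simpa [hij.ne'] using habove j hij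
    rcases eq_or_ne j i₀ with rfl | hj
    · simpa [hi] using hbelow i hij
    · simpa [hi, hj] using (hs hij).le
  rw [hupdate]
  by_cases hinj : Function.Injective (Function.update s i₀ r')
  · refine hA (hmono.strictMono_of_injective hinj) ht (fun i => ?_) htT
    by_cases hi : i = i₀ <;> simp [hi, hr', hsS]
  · obtain ⟨i, j, hij, hne⟩ := Function.not_injective_iff.1 hinj
    rw [det_zero_of_row_eq hne (by ext l; simp [hij])]
    exact P.zero_mem

theorem row_combination {r r' : ι} {c p q : R} (hA : IsTotallyNonnegOn P A S T) (hr' : r' ∈ S)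
    (hadj : r ⋖ r' ∨ r' ⋖ r) (hc : c ∈ divisorSubmonoid P) (hp : p ∈ P) (hq : q ∈ P)
    (hne : ∀ i ∈ S, i ≠ r → ∀ j ∈ T, A i j = B i j)
    (hrow : ∀ j ∈ T, B r j * c = A r j * p + A r' j * q) : IsTotallyNonnegOn P B S T := by
  intro k s t hs ht hsS htT
  by_cases hr : ∃ i₀, s i₀ = r
  · obtain ⟨i₀, rfl⟩ := hr
    apply hc.2
    have hB : B.submatrix s t = (A.submatrix s t).updateRow i₀ fun j => B (s i₀) (t j) := by
      ext i j
      rw [updateRow_apply]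
      split_ifs with hi
      · rw [hi, submatrix_apply]
      · exact (hne _ (hsS i) (hs.injective.ne hi) _ (htT j)).symm
    have hcomb : (c • fun j => B (s i₀) (t j)) =
        (p • A.submatrix s t i₀) + q • fun j => A r' (t j) := by
      ext j
      simpa [mul_comm] using hrow (t j) (htT j)
    rw [hB, mul_comm, ← det_updateRow_smul, hcomb, det_updateRow_add, det_updateRow_smul,
      det_updateRow_smul, updateRow_eq_self]
    exact P.add_mem (P.mul_mem hp (hA hs ht hsS htT))
      (P.mul_mem hq (hA.det_updateRow_mem hs ht hsS htT hr' hadj))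
  · convert hA hs ht hsS htT using 2
    ext i j
    exact (hne _ (hsS i) (fun h => hr ⟨i, h⟩) _ (htT j)).symm

section ReplaceRows

variable {u v : Matrix ℕ κ R} {r N : ℕ}

theorem spliceRows_of_succ {S : Set ℕ} {r' : ℕ} {c p q : R}
    (h : IsTotallyNonnegOn P (spliceRows u v (r + 1)) S T) (hr' : r' ∈ S)
    (hadj : r ⋖ r' ∨ r' ⋖ r) (hc : c ∈ divisorSubmonoid P) (hp : p ∈ P) (hq : q ∈ P)
    (hrow : ∀ j ∈ T, v r j * c = u r j * p + spliceRows u v (r + 1) r' j * q) :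
    IsTotallyNonnegOn P (spliceRows u v r) S T := by
  refine h.row_combination hr' hadj hc hp hq (fun i _ hi j _ => ?_) fun j hj => ?_
  · rcases hi.lt_or_gt with hi | hi
    · rw [spliceRows_of_lt hi, spliceRows_of_lt (by omega)]
    · rw [spliceRows_of_le hi.le, spliceRows_of_le hi]
  · rw [spliceRows_of_le le_rfl, spliceRows_of_lt r.lt_succ_self, hrow j hj]

/-- Rows are replaced from the last to the first, so the row above is still the old one. -/
theorem replace_rows_using_previous (hu : IsTotallyNonnegOn P u (Set.Iio N) T)
    (hzero : ∀ j ∈ T, u 0 j = v 0 j)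
    (hstep : ∀ i, i + 1 < N → ∃ c ∈ divisorSubmonoid P, ∃ p ∈ P, ∃ q ∈ P,
      ∀ j ∈ T, v (i + 1) j * c = u (i + 1) j * p + u i j * q) :
    IsTotallyNonnegOn P v (Set.Iio N) T := by
  rcases N.eq_zero_or_pos with rfl | hN
  · simpa using of_rows_empty
  have hone : IsTotallyNonnegOn P (spliceRows u v 1) (Set.Iio N) T := by
    refine Nat.decreasingInduction' (P := fun r =>
      IsTotallyNonnegOn P (spliceRows u v r) (Set.Iio N) T) (fun r hrN hr ih => ?_) hN
      (hu.congr fun i hi j _ => (spliceRows_of_lt hi).symm)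
    obtain ⟨r, rfl⟩ := Nat.exists_eq_add_one.2 hr
    obtain ⟨c, hc, p, hp, q, hq, hrow⟩ := hstep r hrN
    refine ih.spliceRows_of_succ (r' := r) (by simp; omega) (.inr (by simp)) hc hp hq
      fun j hj => ?_
    rw [spliceRows_of_lt (by omega), hrow j hj]
  refine hone.congr fun i _ j hj => ?_
  rcases i.eq_zero_or_pos with rfl | hi
  · rw [spliceRows_of_lt one_pos, hzero j hj]
  · rw [spliceRows_of_le hi]

/-- Rows are replaced from the last to the first, so the row below is already the new one. -/
theorem replace_rows_using_next (hu : IsTotallyNonnegOn P (spliceRows u v N) (Set.Iic N) T)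
    (hstep : ∀ i < N, ∃ c ∈ divisorSubmonoid P, ∃ p ∈ P, ∃ q ∈ P,
      ∀ j ∈ T, v i j * c = u i j * p + v (i + 1) j * q) :
    IsTotallyNonnegOn P v (Set.Iic N) T := by
  have hzero : IsTotallyNonnegOn P (spliceRows u v 0) (Set.Iic N) T := by
    refine Nat.decreasingInduction' (P := fun r =>
      IsTotallyNonnegOn P (spliceRows u v r) (Set.Iic N) T) (fun r hrN _ ih => ?_) N.zero_le hu
    obtain ⟨c, hc, p, hp, q, hq, hrow⟩ := hstep r hrN
    refine ih.spliceRows_of_succ (r' := r + 1) hrN (.inl (by simp)) hc hp hq fun j hj => ?_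
    rw [spliceRows_of_le le_rfl, hrow j hj]
  exact hzero.congr fun i _ j _ => spliceRows_of_le i.zero_le

end ReplaceRows

end IsTotallyNonnegOn

end TotallyNonneg

section Casoratian

variable {R : Type*} [CommRing R] {k N : ℕ}

/-- The Casoratian at `a` of the sequences `w 0, …, w (k - 1)`, the discrete analogue of the
Wronskian. Each sequence is a row of the determinant. -/
def casoratian (w : Fin k → ℕ → R) (a : ℕ) : R :=
  (of fun l i : Fin k => w l (a + i)).det

theorem casoratian_eq_zero_of_eq {w : Fin k → ℕ → R} {i j : Fin k} (hij : i ≠ j)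
    (h : w i = w j) (a : ℕ) : casoratian w a = 0 :=
  det_zero_of_row_eq hij (by ext; simp [h])

theorem casoratian_comp_perm (w : Fin k → ℕ → R) (e : Equiv.Perm (Fin k)) (a : ℕ) :
    casoratian (w ∘ e) a = Equiv.Perm.sign e * casoratian w a :=
  det_permute e (of fun l i : Fin k => w l (a + i))

theorem casoratian_comp_rev (w : Fin k → ℕ → R) (a : ℕ) :
    casoratian (w ∘ Fin.rev) a = (∏ i : Fin k, (-1) ^ (i : ℕ)) * casoratian w a := by
  change casoratian (w ∘ Fin.revPerm) a = _
  rw [casoratian_comp_perm, sign_revPerm]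
  simp

theorem casoratian_snoc (w : Fin k → ℕ → R) (f : ℕ → R) (a : ℕ) :
    casoratian (Fin.snoc (α := fun _ => ℕ → R) w f) a =
      (-1) ^ k * casoratian (vecCons f w) a := by
  have hsnoc : Fin.snoc (α := fun _ => ℕ → R) w f = vecCons f w ∘ finRotate (k + 1) :=
    Fin.snoc_eq_cons_rotate w f
  rw [hsnoc, casoratian_comp_perm, sign_finRotate]
  simp

theorem casoratian_vecCons_swap (f g : ℕ → R) (w : Fin k → ℕ → R) (a : ℕ) :
    casoratian (vecCons f (vecCons g w)) a = -casoratian (vecCons g (vecCons f w)) a := by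
  have hswap : vecCons f (vecCons g w) = vecCons g (vecCons f w) ∘ Equiv.swap 0 1 := by
    funext i
    refine Fin.cases (by simp) (Fin.cases (by simp) fun i => ?_) i
    rw [Function.comp_apply,
      Equiv.swap_apply_of_ne_of_ne (Fin.succ_ne_zero _) (by simp [Fin.ext_iff])]
    rfl
  rw [hswap, casoratian_comp_perm, Equiv.Perm.sign_swap (by simp)]
  simp

theorem casoratian_vecCons_snoc (f : ℕ → R) (w : Fin k → ℕ → R) (g : ℕ → R) (a : ℕ) :
    casoratian (vecCons f (Fin.snoc (α := fun _ => ℕ → R) w g)) a =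
      (-1) ^ k * casoratian (vecCons f (vecCons g w)) a := by
  rw [← Fin.snoc_vecCons, casoratian_snoc, casoratian_vecCons_swap, pow_succ]
  ring

theorem casoratian_vecCons_single_zero (w : Fin k → ℕ → R) (a : ℕ) :
    casoratian (vecCons (Pi.single a 1) w) a = casoratian w (a + 1) := by
  rw [casoratian, det_eq_mul_det_submatrix_of_row (p := 0) (q := 0) fun j hj => by
    simp [show (j : ℕ) ≠ 0 from Fin.val_ne_of_ne hj]]
  simp only [Fin.val_zero, add_zero, of_apply, cons_val_zero, Pi.single_eq_same, pow_zero,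
    mul_one, one_mul, casoratian]
  congr 1
  ext l i
  simp [add_assoc, add_comm 1]

theorem casoratian_vecCons_vecCons_single_zero (f : ℕ → R) (w : Fin k → ℕ → R) (a : ℕ) :
    casoratian (vecCons f (vecCons (Pi.single a 1) w)) a = -casoratian (vecCons f w) (a + 1) := by
  rw [casoratian_vecCons_swap, casoratian_vecCons_single_zero]

theorem casoratian_vecCons_single_of_lt (w : Fin k → ℕ → R) (a : ℕ) {s : ℕ} (hs : k < s) :
    casoratian (vecCons (Pi.single (a + s) 1) w) a = 0 :=
  det_eq_zero_of_row_eq_zero 0 fun j => by simp [show (j : ℕ) ≠ s by omega]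

theorem casoratian_vecCons_single_self (w : Fin k → ℕ → R) (a : ℕ) :
    casoratian (vecCons (Pi.single (a + k) 1) w) a = (-1) ^ k * casoratian w a := by
  rw [casoratian, det_eq_mul_det_submatrix_of_row (p := 0) (q := Fin.last k) fun j hj => by
    simp [show (j : ℕ) ≠ k from Fin.val_ne_of_ne hj]]
  simp only [Fin.val_last, Fin.val_zero, zero_add, of_apply, cons_val_zero, Pi.single_eq_same,
    mul_one, casoratian]
  congr 2
  ext l i
  simp

theorem casoratian_vecCons_eq_sum (f : ℕ → R) (w : Fin k → ℕ → R) (a : ℕ) (hN : k < N) :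
    casoratian (vecCons f w) a =
      ∑ s : Fin N, casoratian (vecCons (Pi.single (a + s) 1) w) a * f (a + s) := by
  have hlaplace : ∀ f, casoratian (vecCons f w) a = ∑ s : Fin (k + 1), (-1) ^ (s : ℕ) *
      f (a + s) * (of fun l j => w l (a + s.succAbove j)).det := fun f =>
    det_succ_row_zero _
  have hsingle : ∀ s : Fin (k + 1), casoratian (vecCons (Pi.single (a + s) 1) w) a =
      (-1) ^ (s : ℕ) * (of fun l j => w l (a + s.succAbove j)).det := fun s => by
    rw [hlaplace, Finset.sum_eq_single s (fun t _ ht => by simp [Fin.val_ne_of_ne ht]) (by simp)]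
    simp
  have hfull : casoratian (vecCons f w) a =
      ∑ s : Fin (k + 1), casoratian (vecCons (Pi.single (a + s) 1) w) a * f (a + s) := by
    rw [hlaplace]
    exact Finset.sum_congr rfl fun s _ => by rw [hsingle, mul_right_comm]
  let term (s : ℕ) := casoratian (vecCons (Pi.single (a + s) 1) w) a * f (a + s)
  rw [hfull, Fin.sum_univ_eq_sum_range term, Fin.sum_univ_eq_sum_range term]
  refine Finset.sum_subset (Finset.range_subset_range.2 hN) fun s _ hs => ?_
  simp only [term]
  rw [casoratian_vecCons_single_of_lt w a (by simpa using hs), zero_mul]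

theorem sum_casoratian_removeNth_mul (w : Fin (N + 1) → ℕ → R) (a : ℕ) (s : Fin N) :
    ∑ l : Fin (N + 1), (-1) ^ (l : ℕ) * casoratian (l.removeNth w) a * w l (a + s) = 0 := by
  let A : Matrix (Fin (N + 1)) (Fin (N + 1)) R :=
    of fun l => vecCons (w l (a + s)) fun i : Fin N => w l (a + i)
  have hA : A.det = 0 := det_zero_of_column_eq (Fin.succ_ne_zero s).symm fun l => by simp [A]
  rw [← hA, det_succ_column_zero]
  refine Finset.sum_congr rfl fun l _ => ?_
  rw [mul_right_comm, casoratian]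
  congr 2

theorem sum_casoratian_removeNth_mul_casoratian_vecCons (w : Fin (N + 1) → ℕ → R)
    (v : Fin k → ℕ → R) (a : ℕ) (hN : k < N) :
    ∑ l : Fin (N + 1), (-1) ^ (l : ℕ) * casoratian (l.removeNth w) a *
      casoratian (vecCons (w l) v) a = 0 := by
  rw [Finset.sum_congr rfl fun l _ => by
    rw [casoratian_vecCons_eq_sum (w l) v a hN, Finset.mul_sum], Finset.sum_comm]
  refine Finset.sum_eq_zero fun s _ => ?_
  rw [← mul_zero (casoratian (vecCons (Pi.single (a + s) 1) v) a),
    ← sum_casoratian_removeNth_mul w a s, Finset.mul_sum]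
  exact Finset.sum_congr rfl fun l _ => mul_left_comm _ _ _

theorem casoratian_plucker (u v x : ℕ → R) (C : Fin k → ℕ → R) (a : ℕ) :
    casoratian (vecCons u (vecCons x C)) a * casoratian (vecCons v C) a =
      casoratian (vecCons u (vecCons v C)) a * casoratian (vecCons x C) a +
        casoratian (vecCons u C) a * casoratian (vecCons v (vecCons x C)) a := by
  have h := sum_casoratian_removeNth_mul_casoratian_vecCons
    (vecCons u (vecCons v (vecCons x C))) C a (by omega)
  have hrepeat : ∀ i, casoratian (vecCons (C i) C) a = 0 := fun i =>
    casoratian_eq_zero_of_eq (Fin.succ_ne_zero i).symm rfl a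
  have hu : (0 : Fin (k + 3)).removeNth (vecCons u (vecCons v (vecCons x C))) =
      vecCons v (vecCons x C) := rfl
  have hv : (1 : Fin (k + 3)).removeNth (vecCons u (vecCons v (vecCons x C))) =
      vecCons u (vecCons x C) := Fin.cons_comp_succ_succAbove u _ 0
  have hx : (Fin.succ 1).removeNth (vecCons u (vecCons v (vecCons x C))) =
      vecCons u (vecCons v C) :=
    (Fin.cons_comp_succ_succAbove u _ 1).trans
      (congrArg (vecCons u) (Fin.cons_comp_succ_succAbove v _ 0))
  rw [Fin.sum_univ_succ, Fin.sum_univ_succ, Fin.sum_univ_succ,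
    Finset.sum_eq_zero fun i _ => by simp only [cons_val_succ, hrepeat, mul_zero]] at h
  simp only [Fin.succ_zero_eq_one, hu, hv, hx, cons_val_zero, cons_val_one, cons_val_succ,
    Fin.val_zero, Fin.val_succ, Fin.val_one] at h
  linear_combination -h

theorem casoratian_dodgson (u v : ℕ → R) (C : Fin k → ℕ → R) (a : ℕ) :
    casoratian (vecCons u C) a * casoratian (vecCons v C) (a + 1) =
      casoratian (vecCons u C) (a + 1) * casoratian (vecCons v C) a +
        casoratian (vecCons u (vecCons v C)) a * casoratian C (a + 1) := by
  have h := casoratian_plucker u v (Pi.single a 1) C a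
  simp only [casoratian_vecCons_vecCons_single_zero, casoratian_vecCons_single_zero] at h
  linear_combination h

end Casoratian

section Windows

/-- The entries of `w` at `b + k - 1, …, b`, in this decreasing order. -/
def descend {α : Type*} (w : ℕ → α) (b k : ℕ) : Fin k → α :=
  fun l => w (b + Fin.rev l)

theorem descend_succ {α : Type*} (w : ℕ → α) (b k : ℕ) :
    descend w b (k + 1) = vecCons (w (b + k)) (descend w b k) := by
  funext l
  refine Fin.cases (by simp [descend]) (fun l => by simp [descend, Fin.rev_succ]) l

theorem descend_succ' {α : Type*} (w : ℕ → α) (b k : ℕ) :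
    descend w b (k + 1) = Fin.snoc (α := fun _ => α) (descend w (b + 1) k) (w b) := by
  funext l
  refine Fin.lastCases (by simp [descend]) (fun l => ?_) l
  simp [descend, Fin.rev_castSucc, add_assoc, add_comm 1]

variable {R : Type*} [CommRing R] (w : ℕ → ℕ → R) (f : ℕ → R) (a b : ℕ)

/-- The minor of the array `w` on the rows `a, …, a + k - 1` and the columns
`b + k - 1, …, b`. -/
def windowMinor (k : ℕ) : R :=
  casoratian (descend w b k) a

/-- The value at `a` of a difference operator of order `k` that annihilates the columns
`b, …, b + k - 1` of `w`. -/
def windowOp (k : ℕ) : R :=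
  casoratian (vecCons f (descend w b k)) a

theorem windowOp_zero : windowOp w f a b 0 = f a := by
  simp [windowOp, casoratian]

theorem windowMinor_swap (k : ℕ) :
    windowMinor (Function.swap w) a b k = windowMinor w b a k := by
  rw [windowMinor, casoratian, ← det_transpose, ← det_submatrix_equiv_self Fin.revPerm]
  simp only [windowMinor, casoratian, descend, Function.swap]
  congr 1
  ext
  simp only [submatrix_apply, transpose_apply, of_apply, Fin.revPerm_apply, Fin.rev_rev]

theorem windowOp_self (k : ℕ) : windowOp w (w (b + k)) a b k = windowMinor w a b (k + 1) := by
  rw [windowOp, windowMinor, descend_succ]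

theorem windowOp_eq_zero {j k : ℕ} (hbj : b ≤ j) (hjk : j < b + k) :
    windowOp w (w j) a b k = 0 := by
  let l : Fin k := Fin.rev ⟨j - b, by omega⟩
  refine casoratian_eq_zero_of_eq (i := 0) (j := l.succ) (Fin.succ_ne_zero l).symm ?_ a
  simp [descend, l, Nat.add_sub_cancel' hbj]

theorem windowOp_column_step (k : ℕ) :
    windowOp w f a b (k + 1) * windowMinor w a (b + 1) (k + 1) =
      windowOp w f a (b + 1) (k + 1) * windowMinor w a b (k + 1) +
        windowOp w f a (b + 1) k * windowMinor w a b (k + 2) := by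
  have h := casoratian_plucker f (w (b + 1 + k)) (w b) (descend w (b + 1) k) a
  simp only [windowOp, windowMinor]
  rw [descend_succ w b (k + 1), descend_succ' w b k, descend_succ w (b + 1) k,
    casoratian_vecCons_snoc, casoratian_vecCons_snoc, casoratian_snoc,
    show b + (k + 1) = b + 1 + k by ring]
  linear_combination (-1) ^ k * h

theorem windowOp_row_step (k : ℕ) :
    windowOp w f a b k * windowMinor w (a + 1) b (k + 1) =
      windowOp w f (a + 1) b k * windowMinor w a b (k + 1) +
        windowOp w f a b (k + 1) * windowMinor w (a + 1) b k := by
  simp only [windowOp, windowMinor, descend_succ]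
  exact casoratian_dodgson f (w (b + k)) (descend w b k) a

theorem det_windowOp {k : ℕ} (f : Fin k → ℕ → R) :
    (of fun i l : Fin k => windowOp w (f l) a b i).det =
      (∏ i : Fin k, windowMinor w a b i) * casoratian (f ∘ Fin.rev) a := by
  let L : Matrix (Fin k) (Fin k) R := of fun i s => windowOp w (Pi.single (a + s) 1) a b i
  have hfactor : (of fun i l : Fin k => windowOp w (f l) a b i) =
      L * (of fun l s : Fin k => f l (a + s))ᵀ := by
    ext i l
    exact casoratian_vecCons_eq_sum (f l) _ a i.isLt
  have hlower : L.IsLowerTriangular := fun i s his =>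
    casoratian_vecCons_single_of_lt _ a his
  have hdiag : ∀ i, L i i = (-1) ^ (i : ℕ) * windowMinor w a b i := fun i =>
    casoratian_vecCons_single_self _ a
  rw [hfactor, det_mul, det_of_isLowerTriangular _ hlower, det_transpose, casoratian_comp_rev]
  simp only [hdiag, Finset.prod_mul_distrib, casoratian]
  ring

end Windows

section Core

variable {R : Type*} [CommRing R] {P : Subsemiring R} {w : ℕ → ℕ → R} {m : ℕ}

/-- The difference operators of all orders at `(a, b)`, applied to all columns of `w`. -/
def windowOpMatrix (w : ℕ → ℕ → R) (a b : ℕ) : Matrix ℕ ℕ R :=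
  of fun k j => windowOp w (w j) a b k

theorem isTotallyNonnegOn_windowOpMatrix_column_step {a h : ℕ}
    (hdiag : ∀ k ≤ h, windowMinor w (a + 1) (a + 1) k ∈ divisorSubmonoid P)
    (hsub : ∀ k ≤ h, windowMinor w (a + 1) a k ∈ divisorSubmonoid P) {T : Set ℕ}
    (hT : IsTotallyNonnegOn P (windowOpMatrix w (a + 1) (a + 1)) (Set.Iio h) T)
    (haT : ∀ j ∈ T, a < j) :
    IsTotallyNonnegOn P (windowOpMatrix w (a + 1) a) (Set.Iio h) (insert a T) := by
  rcases h.eq_zero_or_pos with rfl | hh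
  · simpa using .of_rows_empty
  refine (hT.replace_rows_using_previous (by simp [windowOpMatrix, windowOp_zero])
    fun k hk => ?_).insert_col (r := 0) haT (by simp) (fun k _ hk => ?_) ?_
  · exact ⟨_, hdiag (k + 1) hk.le, _, (hsub (k + 1) hk.le).1, _, (hsub (k + 2) hk).1,
      fun j _ => windowOp_column_step w (w j) (a + 1) a k⟩
  · exact windowOp_eq_zero w _ _ le_rfl (by omega)
  · change windowOp w (w (a + 0)) (a + 1) a 0 ∈ P
    rw [windowOp_self]
    exact (hsub 1 hh).1

theorem isTotallyNonnegOn_windowOpMatrix_row_step {a h : ℕ}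
    (hdiag : ∀ k ≤ h + 1, windowMinor w a a k ∈ divisorSubmonoid P)
    (hsub : ∀ k ≤ h, windowMinor w (a + 1) a k ∈ divisorSubmonoid P)
    (hT : IsTotallyNonnegOn P (windowOpMatrix w (a + 1) a) (Set.Iio h) (Set.Icc a (a + h))) :
    IsTotallyNonnegOn P (windowOpMatrix w a a) (Set.Iic h) (Set.Icc a (a + h)) := by
  refine .replace_rows_using_next (u := windowOpMatrix w (a + 1) a) ?_ fun k hk => ?_
  · rw [← Set.Iio_insert]
    refine IsTotallyNonnegOn.insert_row (c := a + h)
      (hT.congr fun i hi j _ => (spliceRows_of_lt hi).symm)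
      (fun _ => id) (fun _ hj => hj.2) (fun j hj hne => ?_) ?_ <;>
    rw [spliceRows_of_le le_rfl]
    · exact windowOp_eq_zero w a a hj.1 (lt_of_le_of_ne hj.2 hne)
    · change windowOp w (w (a + h)) a a h ∈ P
      rw [windowOp_self]
      exact (hdiag _ le_rfl).1
  · exact ⟨_, hsub (k + 1) hk, _, (hdiag (k + 1) (by omega)).1, _, (hsub k hk.le).1,
      fun j _ => windowOp_row_step w (w j) a a k⟩

theorem isTotallyNonnegOn_windowOpMatrix
    (hdiag : ∀ a k, a + k ≤ m → windowMinor w a a k ∈ divisorSubmonoid P)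
    (hsub : ∀ a k, a + 1 + k ≤ m → windowMinor w (a + 1) a k ∈ divisorSubmonoid P)
    {a h : ℕ} (hm : a + h ≤ m) :
    IsTotallyNonnegOn P (windowOpMatrix w a a) (Set.Iio h) (Set.Ico a (a + h)) := by
  induction h generalizing a with
  | zero => simpa using .of_rows_empty
  | succ h ih =>
    have hcol := isTotallyNonnegOn_windowOpMatrix_column_step
      (fun k hk => hdiag (a + 1) k (by omega)) (fun k hk => hsub a k (by omega))
      (ih (a := a + 1) (by omega)) (fun j hj => hj.1)
    have hIcc : insert a (Set.Ico (a + 1) (a + 1 + h)) = Set.Icc a (a + h) := by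
      ext; simp; omega
    have hIco : Set.Ico a (a + (h + 1)) = Set.Icc a (a + h) := by
      ext; simp; omega
    rw [hIcc] at hcol
    rw [hIco, ← Order.succ_eq_add_one, Order.Iio_succ]
    exact isTotallyNonnegOn_windowOpMatrix_row_step (fun k hk => hdiag a k (by omega))
      (fun k hk => hsub a k (by omega)) hcol

theorem windowMinor_zero_left_mem
    (hdiag : ∀ a k, a + k ≤ m → windowMinor w a a k ∈ divisorSubmonoid P)
    (hsub : ∀ a k, a + 1 + k ≤ m → windowMinor w (a + 1) a k ∈ divisorSubmonoid P)
    {j k : ℕ} (hjk : j + k ≤ m) : windowMinor w 0 j k ∈ P := by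
  have hTN := isTotallyNonnegOn_windowOpMatrix hdiag hsub (zero_add m).le
  have hdet := hTN (k := k) (s := fun i => i) (t := fun l => j + l) (fun _ _ h => h)
    (fun _ _ h => Nat.add_lt_add_left h j) (fun i => by simp; omega) (fun l => by simp; omega)
  have hprod : ∏ i : Fin k, windowMinor w 0 0 i ∈ divisorSubmonoid P :=
    Submonoid.prod_mem _ fun i _ => hdiag 0 i (by omega)
  refine hprod.2 _ ?_
  rw [mul_comm, windowMinor]
  exact (det_windowOp w 0 0 fun l : Fin k => w (j + l)) ▸ hdet

end Core

section Application

theorem exists_coeff_nonneg_of_mem_laurentSubalgebra {σ X : Type*} {x : σ → X → ℝ} {g : X → ℝ}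
    (hg : g ∈ laurentSubalgebra ℝ≥0 x) :
    ∃ (e : σ →₀ ℕ) (p : MvPolynomial σ ℝ), (∀ m, 0 ≤ p.coeff m) ∧
      ∀ t, g t * e.prod (fun s k => x s t ^ k) = MvPolynomial.eval (fun s => x s t) p := by
  obtain ⟨e, p, h⟩ := hg
  refine ⟨e, p.map NNReal.toRealHom, fun m => ?_, fun t => ?_⟩
  · rw [MvPolynomial.coeff_map]
    exact NNReal.coe_nonneg _
  · have heval : MvPolynomial.aeval x p t =
        MvPolynomial.eval₂ NNReal.toRealHom (fun s => x s t) p :=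
      MvPolynomial.comp_aeval_apply x (Pi.evalAlgHom ℝ≥0 (fun _ => ℝ) t) p
    rw [MvPolynomial.eval_map, ← heval, ← h]
    simp [Finsupp.prod]

theorem contiguousMinor_zero {n : ℕ} (M : Matrix (ZMod n) (ZMod n) ℝ) (a b : ℤ) :
    contiguousMinor n M a b 0 = 1 :=
  det_fin_zero

theorem contiguousMinor_congr {n : ℕ} (M : Matrix (ZMod n) (ZMod n) ℝ) {a a' b b' : ℤ} (y : ℕ)
    (ha : (a : ZMod n) = a') (hb : (b : ZMod n) = b') :
    contiguousMinor n M a b y = contiguousMinor n M a' b' y := by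
  simp only [contiguousMinor, Int.cast_add, Int.cast_sub, ha, hb]

theorem centralMinor_add_mul_period {n : ℕ} (M : Matrix (ZMod n) (ZMod n) ℝ) (x q : ℤ) (y : ℕ) :
    centralMinor n M (x + 2 * n * q) y = centralMinor n M x y := by
  have hfdiv : ∀ z : ℤ, (z + n * q * 2).fdiv 2 = z.fdiv 2 + n * q := fun z =>
    Int.add_mul_fdiv_right z (n * q) two_ne_zero
  unfold centralMinor
  rw [show x + 2 * n * q - y = x - y + n * q * 2 by ring,
    show x - y + n * q * 2 + n - (n - 1 : ℤ) % 2 = x - y + n - (n - 1 : ℤ) % 2 + n * q * 2 by ring,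
    hfdiv, hfdiv]
  exact contiguousMinor_congr M y (by simp) (by simp)

theorem centralMinor_two_mul_add {n : ℕ} (M : Matrix (ZMod n) (ZMod n) ℝ) (a : ℤ) (y : ℕ) :
    centralMinor n M (2 * a + y) y = contiguousMinor n M a (a + (n - 1) / 2) y := by
  unfold centralMinor
  congr 1 <;> rw [Int.fdiv_eq_ediv_of_nonneg _ (by norm_num)] <;> omega

theorem centralMinor_two_mul_add_one_add {n : ℕ} (M : Matrix (ZMod n) (ZMod n) ℝ) (a : ℤ)
    (y : ℕ) :
    centralMinor n M (2 * a + 1 + y) y = contiguousMinor n M a (a + (n - 1) / 2 + 1) y := by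
  unfold centralMinor
  congr 1 <;> rw [Int.fdiv_eq_ediv_of_nonneg _ (by norm_num)] <;> omega

/-- The Laurent polynomials with nonnegative coefficients in the small central minors, as functions
of the matrix. -/
noncomputable def smallCentralLaurent (n : ℕ) :
    Subsemiring (Matrix (ZMod n) (ZMod n) ℝ → ℝ) :=
  (laurentSubalgebra ℝ≥0 fun (s : SmallIdx n) M => centralMinor n M s.1.1 s.1.2).toSubsemiring

theorem centralMinor_mem_divisorSubmonoid {n : ℕ} [NeZero n] (x : ℤ) {y : ℕ}
    (hy : 2 * y < n ∨ 2 * y = n ∧ Odd (x + y)) :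
    (fun M => centralMinor n M x y) ∈
      divisorSubmonoid (smallCentralLaurent n) := by
  have hn : 0 < n := NeZero.pos n
  rcases y.eq_zero_or_pos with rfl | hpos
  · simp only [centralMinor, contiguousMinor_zero]
    exact Submonoid.one_mem _
  set r : ℤ := (x - 1) % (2 * n) + 1
  set q : ℤ := (x - 1) / (2 * n)
  have hx : x = r + 2 * n * q := by
    linarith [Int.emod_add_mul_ediv (x - 1) (2 * n)]
  have hr : (r, y) ∈ SmallIdx n := by
    refine ⟨by simp [r, Int.emod_nonneg, hn.ne'], Int.emod_lt_of_pos _ (by omega),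
      hy.imp (⟨hpos, ·⟩) (And.imp_right fun hodd => ?_)⟩
    rw [hx, show r + 2 * n * q + y = r + y + 2 * (n * q) by ring] at hodd
    simpa [Int.odd_add] using hodd
  simp only [hx, centralMinor_add_mul_period]
  exact mem_divisorSubmonoid_laurentSubalgebra
    (fun (s : SmallIdx n) M => centralMinor n M s.1.1 s.1.2) ⟨_, hr⟩

theorem contiguousMinor_half_mem_divisorSubmonoid {n : ℕ} [NeZero n] (a : ℤ) {y : ℕ}
    (hy : 2 * y < n) :
    (fun M => contiguousMinor n M a (a + (n - 1) / 2) y) ∈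
      divisorSubmonoid (smallCentralLaurent n) := by
  simp only [← centralMinor_two_mul_add]
  exact centralMinor_mem_divisorSubmonoid _ (.inl hy)

theorem contiguousMinor_half_add_one_mem_divisorSubmonoid {n : ℕ} [NeZero n] (a : ℤ) {y : ℕ}
    (hy : 2 * y ≤ n) :
    (fun M => contiguousMinor n M a (a + (n - 1) / 2 + 1) y) ∈
      divisorSubmonoid (smallCentralLaurent n) := by
  simp only [← centralMinor_two_mul_add_one_add]
  exact centralMinor_mem_divisorSubmonoid _ (hy.lt_or_eq.imp_right fun h => ⟨h, a + y, by ring⟩)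

/-- The entries of the generic `n × n` matrix from row `a` and column `b` on, as functions of the
matrix. As for `windowMinor`, the column comes first. -/
def entryWindow (n : ℕ) (a b : ℤ) (c r : ℕ) (M : Matrix (ZMod n) (ZMod n) ℝ) : ℝ :=
  M ((a + r : ℤ) : ZMod n) ((b + c : ℤ) : ZMod n)

theorem windowMinor_entryWindow (n : ℕ) (a b : ℤ) (i j k : ℕ) :
    windowMinor (entryWindow n a b) i j k = fun M => contiguousMinor n M (a + i) (b + j) k := by
  funext M
  change Pi.evalRingHom (fun _ => ℝ) M (windowMinor (entryWindow n a b) i j k) = _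
  rw [windowMinor, casoratian, RingHom.map_det,
    ← det_transpose, contiguousMinor]
  congr 1
  ext s t
  simp only [transpose_apply, RingHom.mapMatrix_apply, map_apply, of_apply, descend, entryWindow,
    Pi.evalRingHom_apply]
  congr 2
  · push_cast
    ring
  · rw [Fin.val_rev]
    omega

theorem contiguousMinor_mem_smallCentralLaurent {n : ℕ} [NeZero n] {a b : ℤ} {y : ℕ}
    (hab : y ≤ b - a) (hba : b - a + y ≤ n) :
    (fun M => contiguousMinor n M a b y) ∈ smallCentralLaurent n := by
  by_cases hfar : a + (n - 1) / 2 + 1 ≤ b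
  · obtain ⟨j, hj⟩ := Int.le.dest hfar
    have h := windowMinor_zero_left_mem (P := smallCentralLaurent n)
      (w := entryWindow n a (a + (n - 1) / 2 + 1)) (m := n / 2) (fun i k hik => ?_)
      (fun i k hik => ?_) (j := j) (k := y) (by omega)
    · simpa only [windowMinor_entryWindow, hj, Nat.cast_zero, add_zero] using h
    · rw [windowMinor_entryWindow, show a + (n - 1) / 2 + 1 + i = a + i + (n - 1) / 2 + 1 by ring]
      exact contiguousMinor_half_add_one_mem_divisorSubmonoid _ (by omega)
    · rw [windowMinor_entryWindow,
        show a + (n - 1) / 2 + 1 + i = a + (i + 1 : ℕ) + (n - 1) / 2 by push_cast; ring]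
      exact contiguousMinor_half_mem_divisorSubmonoid _ (by omega)
  · obtain ⟨j, hj⟩ := Int.le.dest (show b - (n - 1) / 2 ≤ a by omega)
    have h := windowMinor_zero_left_mem (P := smallCentralLaurent n)
      (w := Function.swap (entryWindow n (b - (n - 1) / 2) b)) (m := (n - 1) / 2)
      (fun i k hik => ?_) (fun i k hik => ?_) (j := j) (k := y) (by omega)
    · simpa only [windowMinor_swap, windowMinor_entryWindow, hj, Nat.cast_zero, add_zero] using h
    · rw [windowMinor_swap, windowMinor_entryWindow,
        show b + i = b - (n - 1) / 2 + i + (n - 1) / 2 by ring]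
      exact contiguousMinor_half_mem_divisorSubmonoid _ (by omega)
    · rw [windowMinor_swap, windowMinor_entryWindow,
        show b + (i + 1 : ℕ) = b - (n - 1) / 2 + i + (n - 1) / 2 + 1 by push_cast; ring]
      exact contiguousMinor_half_add_one_mem_divisorSubmonoid _ (by omega)

theorem le_emod_sub_and_emod_sub_add_le_of_disjoint {n : ℕ} [NeZero n] {a b : ℤ} {y : ℕ}
    (hdisj : ∀ i j : Fin y, ((a + (i : ℤ) : ℤ) : ZMod n) ≠ ((b + (j : ℤ) : ℤ) : ZMod n)) :
    y ≤ (b - a) % n ∧ (b - a) % n + y ≤ n := by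
  have hn : (n : ℤ) ≠ 0 := mod_cast NeZero.ne n
  obtain ⟨d, hd⟩ := Int.eq_ofNat_of_zero_le (Int.emod_nonneg (b - a) hn)
  have hdn := Int.emod_lt_of_pos (b - a) (show 0 < (n : ℤ) by omega)
  have hb : (b : ZMod n) = a + d := by
    rw [← Int.cast_natCast d, ← hd, ZMod.intCast_mod]
    simp
  rw [hd] at hdn ⊢
  constructor <;> by_contra! hlt
  · exact hdisj ⟨d, by omega⟩ ⟨0, by omega⟩ (by simp [hb])
  · refine hdisj ⟨0, by omega⟩ ⟨n - d, by omega⟩ ?_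
    simp [hb, Nat.cast_sub (show d ≤ n by omega)]

end Application

/-- Any contiguous minor `CM_{a,b,y}` (with `y ≥ 1`) whose row index set
`{a, …, a+y-1}` and column index set `{b, …, b+y-1}` are disjoint modulo `n` is a
positive-coefficient Laurent polynomial in the small central minors. -/
theorem contiguous_laurent_in_small_central_minors (n : ℕ) [NeZero n]
    (a b : ℤ) (y : ℕ) (hy : 1 ≤ y)
    (hdisj : ∀ i j : Fin y, ((a + (i : ℤ) : ℤ) : ZMod n) ≠ ((b + (j : ℤ) : ℤ) : ZMod n)) :
    ∃ (e : (SmallIdx n) →₀ ℕ) (p : MvPolynomial (SmallIdx n) ℝ),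
      (∀ m : (SmallIdx n) →₀ ℕ, 0 ≤ MvPolynomial.coeff m p) ∧
      ∀ M : Matrix (ZMod n) (ZMod n) ℝ,
        contiguousMinor n M a b y * e.prod (fun s k => (centralMinor n M s.1.1 s.1.2) ^ k) =
          MvPolynomial.eval (fun s : SmallIdx n => centralMinor n M s.1.1 s.1.2) p := by
  obtain ⟨hleft, hright⟩ := le_emod_sub_and_emod_sub_add_le_of_disjoint hdisj
  have hb : ((a + (b - a) % n : ℤ) : ZMod n) = b := by simp
  obtain ⟨e, p, hp, h⟩ := exists_coeff_nonneg_of_mem_laurentSubalgebra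
    (contiguousMinor_mem_smallCentralLaurent (n := n) (a := a) (b := a + (b - a) % n) (y := y)
      (by omega) (by omega))
  refine ⟨e, p, hp, fun M => ?_⟩
  rw [← h M, contiguousMinor_congr M y rfl hb]
end

section
/- Fix n ≥ 1 and a noninterlaced pair of k-element subsets A = {a_1,…,a_k} and B = {b_1,…,b_k} of {1,…,n}, listed so that a_1, a_2, …, a_k, b_k, b_{k−1}, …, b_1 occur in circular order. Then there exist multivariate real polynomials p and q in variables indexed by the restricted small-central-minor index set S' = {(x,y) : 1 ≤ x ≤ n, and either 1 ≤ y < n/2, or y = n/2 and x+y is odd}, both with all coefficients nonnegative and with q not identically zero, such that for every SYMMETRIC n×n real matrix M one has det((M_{a_i,b_j})_{i,j}) · q((CM_s(M))_{s∈S'}) = p((CM_s(M))_{s∈S'}). That is, for symmetric matrices every noninterlaced minor is a positive rational function of the small central minors with first index x in {1,…,n} only. -/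
/-- The restricted small-central-minor index set for symmetric matrices:
pairs `(x,y)` with `1 ≤ x ≤ n` and either `1 ≤ y < n/2`, or `y = n/2` and `x + y` odd. -/
def SmallIdxSym (n : ℕ) : Set (ℤ × ℕ) :=
  {s | 1 ≤ s.1 ∧ s.1 ≤ (n : ℤ) ∧
    ((1 ≤ s.2 ∧ 2 * s.2 < n) ∨ (2 * s.2 = n ∧ Odd (s.1 + (s.2 : ℤ))))}

/-!
A three-term Plücker relation multiplies a minor by the smaller one whose rows are its interior rows
together with an index filling a gap. The other minors in it have smaller span or smaller size, so
by induction a noninterlaced minor is a positive rational function of minors whose rows and columns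
are intervals, i.e. of contiguous minors `CM_{a,b,y}`.

With respect to the distance `b - a`, the central minors are exactly the contiguous minors at
distance `⌊(n - 1) / 2⌋` and `⌊(n - 1) / 2⌋ + 1`. The Desnanot–Jacobi identity is a recurrence for
contiguous minors at three successive distances, so it reaches all larger distances, and symmetry
exchanges the distances `b - a` and `n - (b - a)`. For symmetric matrices the central minors are
also `n`-periodic in `x` or, for `n` and `x + y` even, related to their translate by `n` through
the same identity; this brings `x` into `{1, …, n}`.

Working with a generic symmetric matrix over the integers makes the polynomials independent of the
matrix.
-/

section Determinants

open Matrix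

variable {α β γ : Type*} {m : ℕ}

theorem vecCons_snoc_self (r : Fin (m + 2) → α) :
    vecCons (r 0) (Fin.snoc (fun i ↦ r i.succ.castSucc) (r (Fin.last _))) = r :=
  (congrArg (vecCons (r 0)) (Fin.snoc_init_self (Fin.tail r))).trans (Fin.cons_self_tail r)

theorem submatrix_vecCons_vecCons (X : Matrix α β γ) (a b : α)
    (s : Fin m → α) (c : Fin (m + 2) → β) :
    X.submatrix (vecCons a (vecCons b s)) c =
      of (vecCons (fun j ↦ X a (c j)) (vecCons (fun j ↦ X b (c j)) fun i j ↦ X (s i) (c j))) :=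
  Matrix.ext fun i _ ↦ Fin.cases rfl (Fin.cases rfl fun _ ↦ rfl) i

theorem submatrix_init (X : Matrix α β γ) (r : Fin (m + 2) → α) (c : Fin (m + 1) → β) :
    X.submatrix (Fin.init r) c = X.submatrix (vecCons (r 0) fun i ↦ r i.succ.castSucc) c :=
  congrArg (X.submatrix · c) (Fin.cons_self_tail (Fin.init r)).symm

variable {R : Type*} [CommRing R]

theorem det_submatrix_insertNth (X : Matrix α β R) (p : Fin (m + 1)) (u : α)
    (s : Fin m → α) (c : Fin (m + 1) → β) :
    (X.submatrix (p.insertNth u s) c).det =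
      (-1) ^ (p : ℕ) * (X.submatrix (vecCons u s) c).det := by
  have hcycle : (X.submatrix (vecCons u s) c).submatrix p.cycleRange id =
      X.submatrix (p.insertNth u s) c := by
    rw [submatrix_submatrix, vecCons, Fin.cons_comp_cycleRange]
    rfl
  rw [← hcycle, det_permute]
  simp

theorem det_submatrix_snoc (X : Matrix α β R) (u : α) (s : Fin m → α)
    (c : Fin (m + 1) → β) :
    (X.submatrix (Fin.snoc s u : Fin (m + 1) → α) c).det =
      (-1) ^ m * (X.submatrix (vecCons u s) c).det := by
  rw [← Fin.insertNth_last', det_submatrix_insertNth, Fin.val_last]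

theorem det_submatrix_vecCons_insertNth (X : Matrix α β R) (p : Fin (m + 1))
    (a u : α) (s : Fin m → α) (c : Fin (m + 2) → β) :
    (X.submatrix (vecCons a (p.insertNth u s)) c).det =
      (-1) ^ (p + 1 : ℕ) * (X.submatrix (vecCons u (vecCons a s)) c).det := by
  rw [vecCons, ← Fin.insertNth_succ_cons, det_submatrix_insertNth, Fin.val_succ]
  rfl

theorem det_submatrix_vecCons_swap (X : Matrix α β R) (a b : α) (s : Fin m → α)
    (c : Fin (m + 2) → β) :
    (X.submatrix (vecCons a (vecCons b s)) c).det =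
      -(X.submatrix (vecCons b (vecCons a s)) c).det := by
  have h := det_submatrix_vecCons_insertNth X 0 a b s c
  rwa [Fin.insertNth_zero', Fin.val_zero, zero_add, pow_one, neg_one_mul] at h

theorem det_vecCons_swap (x z : Fin (m + 2) → R) (T : Fin m → Fin (m + 2) → R) :
    (of (vecCons x (vecCons z T))).det = -(of (vecCons z (vecCons x T))).det :=
  det_submatrix_vecCons_swap (of id) x z T id

theorem det_submatrix_tail (X : Matrix α β R) (r : Fin (m + 2) → α) (c : Fin (m + 1) → β) :
    (X.submatrix (Fin.tail r) c).det =
      (-1) ^ m * (X.submatrix (vecCons (r (Fin.last _)) fun i ↦ r i.succ.castSucc) c).det := by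
  rw [← det_submatrix_snoc, ← Fin.snoc_init_self (Fin.tail r)]
  rfl

theorem det_submatrix_eq_vecCons_last (X : Matrix α β R) (r : Fin (m + 2) → α)
    (c : Fin (m + 2) → β) :
    (X.submatrix r c).det = (-1) ^ m *
      (X.submatrix (vecCons (r 0) (vecCons (r (Fin.last _)) fun i ↦ r i.succ.castSucc)) c).det := by
  nth_rw 1 [← vecCons_snoc_self r]
  rw [← Fin.insertNth_last', det_submatrix_vecCons_insertNth, det_submatrix_vecCons_swap,
    Fin.val_last]
  ring

theorem det_smul_eq_sum_det_updateRow_smul {ι : Type*} [Fintype ι] [DecidableEq ι]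
    (A : Matrix ι ι R) (t : ι → R) : A.det • t = ∑ l, (A.updateRow l t).det • A l := by
  rw [← det_transpose, ← mulVec_cramer]
  ext x
  simp only [mulVec, dotProduct, transpose_apply, cramer_transpose_apply, Finset.sum_apply,
    Pi.smul_apply, smul_eq_mul, mul_comm]

theorem plucker_three_term (x z t e : Fin (m + 2) → R) (T : Fin m → Fin (m + 2) → R) :
    (of (vecCons x (vecCons z T))).det * (of (vecCons t (vecCons e T))).det =
      (of (vecCons t (vecCons z T))).det * (of (vecCons x (vecCons e T))).det +
        (of (vecCons x (vecCons t T))).det * (of (vecCons z (vecCons e T))).det := by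
  -- Applied to the Cramer expansion of `t` in the rows `x, z, T`, the functional `φ` kills `T`.
  let φ : (Fin (m + 2) → R) →ₗ[R] R :=
    detRowAlternating.toMultilinearMap.toLinearMap (vecCons 0 (vecCons e T)) 0
  have φ_apply (w) : φ w = (of (vecCons w (vecCons e T))).det :=
    congrArg detRowAlternating (Fin.update_cons_zero _ _ _)
  have φ_row (l) : φ (T l) = 0 := by
    rw [φ_apply]
    exact det_zero_of_row_eq (Fin.succ_ne_zero l.succ).symm rfl
  have update_zero : (of (vecCons x (vecCons z T))).updateRow 0 t = of (vecCons t (vecCons z T)) :=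
    congrArg of (Fin.update_cons_zero (α := fun _ ↦ Fin (m + 2) → R) x (vecCons z T) t)
  have update_one :
      (of (vecCons x (vecCons z T))).updateRow (Fin.succ 0) t = of (vecCons x (vecCons t T)) := by
    refine congrArg of ((Fin.cons_update (α := fun _ ↦ Fin (m + 2) → R) x _ 0 t).symm.trans ?_)
    exact congrArg (vecCons x) (Fin.update_cons_zero (α := fun _ ↦ Fin (m + 2) → R) z T t)
  have cramer_rule : (of (vecCons x (vecCons z T))).det * φ t =
      (of (vecCons t (vecCons z T))).det * φ x + ((of (vecCons x (vecCons t T))).det * φ z +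
        ∑ l : Fin m, ((of (vecCons x (vecCons z T))).updateRow l.succ.succ t).det * φ (T l)) := by
    have h := congrArg φ (det_smul_eq_sum_det_updateRow_smul (of (vecCons x (vecCons z T))) t)
    rw [Fin.sum_univ_succ, Fin.sum_univ_succ, update_zero, update_one] at h
    simp only [map_add, map_sum, map_smul, smul_eq_mul] at h
    exact h
  simpa only [φ_row, φ_apply, mul_zero, Finset.sum_const_zero, add_zero] using cramer_rule

theorem det_vecCons_single (q : Fin (m + 1)) (f : Fin m → Fin (m + 1) → R) :
    (of (vecCons (Pi.single q 1) f)).det =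
      (-1) ^ (q : ℕ) * ((of f).submatrix id q.succAbove).det := by
  rw [det_succ_row_zero, Finset.sum_eq_single q]
  · rw [of_apply, cons_val_zero, Pi.single_eq_same, mul_one]
    rfl
  · intro j _ hj
    simp [hj]
  · simp

theorem det_vecCons_single_zero_vecCons (X : Matrix α β R) (a : α) (s : Fin m → α)
    (c : Fin (m + 2) → β) :
    (of (vecCons (Pi.single 0 1)
        (vecCons (fun j ↦ X a (c j)) fun i j ↦ X (s i) (c j)))).det =
      (X.submatrix (vecCons a s) (Fin.tail c)).det := by
  rw [det_vecCons_single, Fin.val_zero, pow_zero, one_mul, Fin.succAbove_zero]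
  exact congrArg det (Matrix.ext fun i _ ↦ Fin.cases rfl (fun _ ↦ rfl) i)

theorem det_vecCons_single_last_vecCons (X : Matrix α β R) (a : α) (s : Fin m → α)
    (c : Fin (m + 2) → β) :
    (of (vecCons (Pi.single (Fin.last _) 1)
        (vecCons (fun j ↦ X a (c j)) fun i j ↦ X (s i) (c j)))).det =
      (-1) ^ (m + 1) * (X.submatrix (vecCons a s) (Fin.init c)).det := by
  rw [det_vecCons_single, Fin.val_last, Fin.succAbove_last]
  congr 2
  exact Matrix.ext fun i _ ↦ Fin.cases rfl (fun _ ↦ rfl) i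

theorem det_submatrix_vecCons_mul_eq_add (X : Matrix α β R) (a b u : α)
    (s : Fin m → α) (c : Fin (m + 2) → β) :
    (X.submatrix (vecCons a (vecCons b s)) c).det * (X.submatrix (vecCons u s) (Fin.tail c)).det =
      (X.submatrix (vecCons a (vecCons u s)) c).det *
          (X.submatrix (vecCons b s) (Fin.tail c)).det +
        (X.submatrix (vecCons u (vecCons b s)) c).det *
          (X.submatrix (vecCons a s) (Fin.tail c)).det := by
  have minor_eq (i : α) :
      (of (vecCons (fun j ↦ X i (c j)) (vecCons (Pi.single 0 1) fun i j ↦ X (s i) (c j)))).det =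
        -(X.submatrix (vecCons i s) (Fin.tail c)).det := by
    rw [det_vecCons_swap, det_vecCons_single_zero_vecCons]
  have h := plucker_three_term (fun j ↦ X a (c j)) (fun j ↦ X b (c j)) (fun j ↦ X u (c j))
    (Pi.single 0 1) fun i j ↦ X (s i) (c j)
  simp only [minor_eq, ← submatrix_vecCons_vecCons] at h
  linear_combination -h

theorem plucker_exchange_row (X : Matrix α β R) (r : Fin (m + 2) → α) (p : Fin (m + 1)) (u : α)
    (c : Fin (m + 2) → β) :
    let r' : Fin (m + 1) → α := p.insertNth u fun i ↦ r i.succ.castSucc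
    (X.submatrix r c).det * (X.submatrix r' (Fin.tail c)).det =
      (X.submatrix (vecCons (r 0) r') c).det * (X.submatrix (Fin.tail r) (Fin.tail c)).det +
        (X.submatrix (Fin.snoc r' (r (Fin.last _)) : Fin (m + 2) → α) c).det *
          (X.submatrix (Fin.init r) (Fin.tail c)).det := by
  intro r'
  have h := det_submatrix_vecCons_mul_eq_add X (r 0) (r (Fin.last _)) u
    (fun i ↦ r i.succ.castSucc) c
  rw [submatrix_init, det_submatrix_tail, det_submatrix_eq_vecCons_last X r,
    det_submatrix_vecCons_insertNth, det_submatrix_snoc, det_submatrix_vecCons_insertNth,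
    det_submatrix_insertNth, det_submatrix_vecCons_swap X u (r 0)]
  linear_combination (-1) ^ (m + p : ℕ) * h

theorem det_submatrix_vecCons_mul_eq_sub (X : Matrix α β R) (a b : α)
    (s : Fin m → α) (c : Fin (m + 2) → β) :
    (X.submatrix (vecCons a (vecCons b s)) c).det *
        (X.submatrix s fun j ↦ c j.succ.castSucc).det =
      (X.submatrix (vecCons a s) (Fin.init c)).det *
          (X.submatrix (vecCons b s) (Fin.tail c)).det -
        (X.submatrix (vecCons a s) (Fin.tail c)).det *
          (X.submatrix (vecCons b s) (Fin.init c)).det := by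
  have inner_minor_eq :
      (of (vecCons (Pi.single (Fin.last _) 1)
          (vecCons (Pi.single 0 1) fun i j ↦ X (s i) (c j)))).det =
        (-1) ^ (m + 1) * (X.submatrix s fun j ↦ c j.succ.castSucc).det := by
    have erase_last :
        (of (vecCons (Pi.single 0 1) fun i j ↦ X (s i) (c j))).submatrix id Fin.castSucc =
          of (vecCons (Pi.single 0 1) fun i j ↦ X (s i) (c j.castSucc)) := by
      refine Matrix.ext fun i j ↦ Fin.cases ?_ (fun _ ↦ rfl) i
      exact Fin.cases rfl (fun _ ↦ rfl) j
    rw [det_vecCons_single, Fin.val_last, Fin.succAbove_last, erase_last, det_vecCons_single,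
      Fin.val_zero, pow_zero, one_mul, Fin.succAbove_zero]
    rfl
  have h := plucker_three_term (Pi.single (Fin.last (m + 1)) 1) (Pi.single 0 1)
    (fun j ↦ X a (c j)) (fun j ↦ X b (c j)) fun i j ↦ X (s i) (c j)
  rw [inner_minor_eq, det_vecCons_swap (fun j ↦ X a (c j)) (Pi.single 0 1)] at h
  simp only [det_vecCons_single_zero_vecCons, det_vecCons_single_last_vecCons,
    ← submatrix_vecCons_vecCons] at h
  refine (isUnit_neg_one.pow (m + 1)).mul_left_cancel ?_
  linear_combination h

theorem desnanot_jacobi (X : Matrix α β R) (r : Fin (m + 2) → α) (c : Fin (m + 2) → β) :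
    (X.submatrix r c).det *
        (X.submatrix (fun i : Fin m ↦ r i.succ.castSucc) fun j : Fin m ↦ c j.succ.castSucc).det =
      (X.submatrix (Fin.init r) (Fin.init c)).det * (X.submatrix (Fin.tail r) (Fin.tail c)).det -
        (X.submatrix (Fin.init r) (Fin.tail c)).det *
          (X.submatrix (Fin.tail r) (Fin.init c)).det := by
  have h := det_submatrix_vecCons_mul_eq_sub X (r 0) (r (Fin.last _))
    (fun i ↦ r i.succ.castSucc) c
  rw [submatrix_init, submatrix_init, det_submatrix_tail, det_submatrix_tail,
    det_submatrix_eq_vecCons_last]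
  linear_combination (-1) ^ m * h

end Determinants

section PositiveRational

open MvPolynomial

variable {σ R : Type*} [CommSemiring R] {v : σ → R} {f g h : R}

/-- `f` is a positive rational function of the values `v s`: the quotient of two nonzero polynomials
in them with natural coefficients. The denominator is cleared, so that this makes sense (and is
stable under specialisation) even when its value vanishes. -/
def IsPositiveRational (v : σ → R) (f : R) : Prop :=
  ∃ p q : MvPolynomial σ ℕ, p ≠ 0 ∧ q ≠ 0 ∧ f * aeval v q = aeval v p

namespace IsPositiveRational

theorem one (v : σ → R) : IsPositiveRational v 1 :=
  ⟨1, 1, one_ne_zero, one_ne_zero, one_mul _⟩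

theorem of_apply (v : σ → R) (s : σ) : IsPositiveRational v (v s) :=
  ⟨X s, 1, X_ne_zero s, one_ne_zero, by rw [map_one, mul_one, aeval_X]⟩

theorem add (hf : IsPositiveRational v f) (hg : IsPositiveRational v g) :
    IsPositiveRational v (f + g) := by
  obtain ⟨p, q, hp, hq, hpq⟩ := hf
  obtain ⟨p', q', -, hq', hpq'⟩ := hg
  refine ⟨p * q' + p' * q, q * q', ?_, mul_ne_zero hq hq', ?_⟩
  · refine fun hsum ↦ mul_ne_zero hp hq' (MvPolynomial.ext _ _ fun d ↦ ?_)
    exact Nat.eq_zero_of_add_eq_zero_right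
      ((coeff_add d _ _).symm.trans (congrArg (coeff d) hsum))
  · simp only [map_add, map_mul, ← hpq, ← hpq']
    ring

theorem mul (hf : IsPositiveRational v f) (hg : IsPositiveRational v g) :
    IsPositiveRational v (f * g) := by
  obtain ⟨p, q, hp, hq, hpq⟩ := hf
  obtain ⟨p', q', hp', hq', hpq'⟩ := hg
  refine ⟨p * p', q * q', mul_ne_zero hp hp', mul_ne_zero hq hq', ?_⟩
  simp only [map_mul, ← hpq, ← hpq']
  ring

theorem of_mul_eq (hf : IsPositiveRational v f) (hg : IsPositiveRational v g) (hfg : h * g = f) :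
    IsPositiveRational v h := by
  obtain ⟨p, q, hp, hq, hpq⟩ := hf
  obtain ⟨p', q', hp', hq', hpq'⟩ := hg
  refine ⟨p * q', q * p', mul_ne_zero hp hq', mul_ne_zero hq hp', ?_⟩
  simp only [map_mul, ← hpq, ← hpq', ← hfg]
  ring

end IsPositiveRational

end PositiveRational

section SolidMinors

open Matrix

variable {m : ℕ}

theorem exists_strictMono_insertNth_of_gap {r : Fin (m + 2) → ℤ} (hr : StrictMono r)
    {p : Fin (m + 1)} (hgap : r p.castSucc + 1 < r p.succ) :
    ∃ u, StrictMono (p.insertNth u fun i ↦ r i.succ.castSucc : Fin (m + 1) → ℤ) ∧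
      ∀ i, (p.insertNth u fun i ↦ r i.succ.castSucc : Fin (m + 1) → ℤ) i ∈
        Set.Ioo (r 0) (r (Fin.last _)) := by
  have hinner : StrictMono fun i : Fin m ↦ r i.succ.castSucc :=
    hr.comp (Fin.strictMono_castSucc.comp Fin.strictMono_succ)
  refine ⟨r p.castSucc + 1,
    (Fin.strictMono_insertNth_iff _ _ _).2 ⟨hinner, fun i hi ↦ ?_, fun i hi ↦ ?_⟩,
    (Fin.forall_iff_succAbove p).2 ⟨?_, fun i ↦ ?_⟩⟩
  · exact Int.lt_add_one_of_le (hr.monotone (Fin.castSucc_le_castSucc_iff.2 hi))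
  · exact hgap.trans_le (hr.monotone (Fin.succ_le_succ_iff.2 hi))
  · rw [Fin.insertNth_apply_same]
    exact ⟨Int.lt_add_one_of_le (hr.monotone (Fin.zero_le _)),
      hgap.trans_le (hr.monotone (Fin.le_last _))⟩
  · rw [Fin.insertNth_apply_succAbove]
    exact ⟨hr (Fin.succ_pos i), hr (Fin.castSucc_lt_last i.succ)⟩

theorem strictMono_snoc {α : Type*} [Preorder α] {s : Fin (m + 1) → α} {u : α} :
    StrictMono (Fin.snoc s u : Fin (m + 2) → α) ↔ StrictMono s ∧ s (Fin.last m) < u := by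
  rw [← Fin.insertNth_last', Fin.strictMono_insertNth_iff]
  refine and_congr_right fun hs ↦
    ⟨fun h ↦ h.1 _ (Fin.castSucc_lt_last _), fun h ↦ ⟨fun i _ ↦ ?_, fun i hi ↦ ?_⟩⟩
  · exact (hs.monotone (Fin.le_last i)).trans_lt h
  · exact absurd hi (Fin.castSucc_lt_last i).not_ge

theorem eq_add_of_forall_succ_eq {r : Fin (m + 1) → ℤ}
    (hr : ∀ i : Fin m, r i.succ = r i.castSucc + 1) (i : Fin (m + 1)) : r i = r 0 + (i : ℕ) := by
  induction i using Fin.induction with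
  | zero => simp
  | succ i ih =>
    rw [hr, ih, Fin.val_castSucc, Fin.val_succ]
    push_cast
    ring

variable {σ R β : Type*} [CommRing R] {v : σ → R}

theorem isPositiveRational_det_of_consecutive_rows {X : Matrix ℤ β R} {I : Set ℤ} [I.OrdConnected]
    {c : Fin (m + 2) → β}
    (hsub : ∀ r : Fin (m + 1) → ℤ, StrictMono r → (∀ i, r i ∈ I) →
      IsPositiveRational v (X.submatrix r (Fin.tail c)).det)
    (hsolid : ∀ a : ℤ, (∀ i : Fin (m + 2), a + (i : ℕ) ∈ I) →
      IsPositiveRational v (X.submatrix (fun i : Fin (m + 2) ↦ a + (i : ℕ)) c).det)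
    {r : Fin (m + 2) → ℤ} (hr : StrictMono r) (hrI : ∀ i, r i ∈ I) :
    IsPositiveRational v (X.submatrix r c).det := by
  induction hspan : (r (Fin.last _) - r 0).toNat using Nat.strong_induction_on generalizing r with
  | _ d ih =>
    by_cases hconsec : ∀ i : Fin (m + 1), r i.succ = r i.castSucc + 1
    · have hr_eq := eq_add_of_forall_succ_eq hconsec
      rw [funext hr_eq]
      exact hsolid _ fun i ↦ hr_eq i ▸ hrI i
    obtain ⟨p, hp⟩ := not_forall.1 hconsec
    have hgap : r p.castSucc + 1 < r p.succ :=
      lt_of_le_of_ne (Int.add_one_le_of_lt (hr p.castSucc_lt_succ)) (Ne.symm hp)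
    obtain ⟨u, hmono, hIoo⟩ := exists_strictMono_insertNth_of_gap hr hgap
    have hexchange := plucker_exchange_row X r p u c
    set r' : Fin (m + 1) → ℤ := p.insertNth u fun i ↦ r i.succ.castSucc
    have hr'I (i) : r' i ∈ I :=
      Set.OrdConnected.out ‹_› (hrI 0) (hrI (Fin.last _)) (Set.Ioo_subset_Icc_self (hIoo i))
    have hcons : IsPositiveRational v (X.submatrix (vecCons (r 0) r') c).det := by
      refine ih _ ?_ (strictMono_vecCons.2 ⟨(hIoo 0).1, hmono⟩) (Fin.cases (hrI 0) hr'I) rfl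
      have := hIoo (Fin.last m)
      simp only [← Fin.succ_last, cons_val_succ, cons_val_zero]
      grind
    have hsnoc : IsPositiveRational v
        (X.submatrix (Fin.snoc r' (r (Fin.last _)) : Fin (m + 2) → ℤ) c).det := by
      refine ih _ ?_ (strictMono_snoc.2 ⟨hmono, (hIoo _).2⟩) (Fin.lastCases ?_ fun i ↦ ?_) rfl
      · have := hIoo 0
        simp only [← Fin.castSucc_zero, Fin.snoc_castSucc, Fin.snoc_last]
        grind
      · rw [Fin.snoc_last]
        exact hrI _
      · rw [Fin.snoc_castSucc]
        exact hr'I i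
    refine .of_mul_eq (.add (.mul hcons (hsub _ ?_ fun i ↦ hrI _))
      (.mul hsnoc (hsub _ ?_ fun i ↦ hrI _))) (hsub r' hmono hr'I) hexchange
    · exact hr.comp Fin.strictMono_succ
    · exact hr.comp Fin.strictMono_castSucc

/-- Every `k × k` minor of `X` with increasing rows in `I` and increasing columns in `J` is a
positive rational function of the values of `v`. -/
def HasPositiveRationalMinors (v : σ → R) (X : Matrix ℤ ℤ R) (I J : Set ℤ) (k : ℕ) : Prop :=
  ∀ ⦃r c : Fin k → ℤ⦄, StrictMono r → StrictMono c → (∀ i, r i ∈ I) → (∀ j, c j ∈ J) →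
    IsPositiveRational v (X.submatrix r c).det

variable {X : Matrix ℤ ℤ R} {I J : Set ℤ}

theorem HasPositiveRationalMinors.of_le_one {k : ℕ} (hk : k ≤ 1)
    (hsolid : ∀ a b : ℤ, (∀ i : Fin k, a + (i : ℕ) ∈ I) → (∀ j : Fin k, b + (j : ℕ) ∈ J) →
      IsPositiveRational v
        (X.submatrix (fun i : Fin k ↦ a + (i : ℕ)) fun j : Fin k ↦ b + (j : ℕ)).det) :
    HasPositiveRationalMinors v X I J k := by
  intro r c _ _ hrI hcJ
  obtain rfl | rfl := Nat.le_one_iff_eq_zero_or_eq_one.1 hk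
  · rw [det_isEmpty]
    exact .one v
  · have eq_add (s : Fin 1 → ℤ) (i : Fin 1) : s i = s 0 + (i : ℕ) := by simp [Fin.fin_one_eq_zero i]
    rw [funext (eq_add r), funext (eq_add c)]
    exact hsolid _ _ (fun i ↦ eq_add r i ▸ hrI i) fun j ↦ eq_add c j ▸ hcJ j

theorem HasPositiveRationalMinors.succ_succ [I.OrdConnected] [J.OrdConnected]
    (hminors : HasPositiveRationalMinors v X I J (m + 1))
    (hsolid : ∀ a b : ℤ, (∀ i : Fin (m + 2), a + (i : ℕ) ∈ I) →
      (∀ j : Fin (m + 2), b + (j : ℕ) ∈ J) →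
      IsPositiveRational v
        (X.submatrix (fun i : Fin (m + 2) ↦ a + (i : ℕ)) fun j : Fin (m + 2) ↦ b + (j : ℕ)).det) :
    HasPositiveRationalMinors v X I J (m + 2) := by
  intro r c hr hc hrI hcJ
  have consecutive_columns (b : ℤ) (hb : ∀ j : Fin (m + 2), b + (j : ℕ) ∈ J) :
      IsPositiveRational v (X.submatrix r fun j : Fin (m + 2) ↦ b + (j : ℕ)).det := by
    have hmono : StrictMono fun j : Fin (m + 2) ↦ b + (j : ℕ) :=
      (Nat.strictMono_cast.comp Fin.val_strictMono).const_add b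
    exact isPositiveRational_det_of_consecutive_rows (c := fun j ↦ b + (j : ℕ))
      (fun s hs hsI ↦ hminors hs (hmono.comp Fin.strictMono_succ) hsI fun j ↦ hb j.succ)
      (fun a ha ↦ hsolid a b ha hb) hr hrI
  rw [← det_transpose, transpose_submatrix]
  refine isPositiveRational_det_of_consecutive_rows (fun s hs hsJ ↦ ?_) (fun b hb ↦ ?_) hc hcJ
  · rw [← transpose_submatrix, det_transpose]
    exact hminors (hr.comp Fin.strictMono_succ) hs (fun i ↦ hrI i.succ) hsJ
  · rw [← transpose_submatrix, det_transpose]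
    exact consecutive_columns b hb

theorem HasPositiveRationalMinors.of_consecutive [I.OrdConnected] [J.OrdConnected]
    (hsolid : ∀ (k : ℕ) (a b : ℤ), (∀ i : Fin k, a + (i : ℕ) ∈ I) →
      (∀ j : Fin k, b + (j : ℕ) ∈ J) →
      IsPositiveRational v
        (X.submatrix (fun i : Fin k ↦ a + (i : ℕ)) fun j : Fin k ↦ b + (j : ℕ)).det) :
    ∀ k, HasPositiveRationalMinors v X I J k
  | 0 => .of_le_one zero_le_one (hsolid 0)
  | 1 => .of_le_one le_rfl (hsolid 1)
  | m + 2 => (of_consecutive hsolid (m + 1)).succ_succ (hsolid (m + 2))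

end SolidMinors

section ContiguousMinors

open Matrix

variable {n : ℕ} {R : Type*} [CommRing R] (M : Matrix (ZMod n) (ZMod n) R) {a b x : ℤ} {d y : ℕ}

/-- The contiguous minor `CM_{a,b,y}(M)` over an arbitrary commutative ring. -/
def contiguousMinorOver (a b : ℤ) (y : ℕ) : R :=
  (of fun i j : Fin y ↦ M ((a + (i : ℕ) : ℤ) : ZMod n) ((b + y - 1 - (j : ℕ) : ℤ) : ZMod n)).det

/-- The central minor `CM_{x,y}(M)` over an arbitrary commutative ring. -/
def centralMinorOver (x : ℤ) (y : ℕ) : R :=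
  contiguousMinorOver M (Int.fdiv (x - y) 2) (Int.fdiv (x - y + n - (n - 1) % 2) 2) y

/-- The family of small central minors that generates the noninterlaced minors of a symmetric
matrix over an arbitrary commutative ring. -/
def smallCentralMinors (s : SmallIdxSym n) : R :=
  centralMinorOver M s.1.1 s.1.2

theorem det_submatrix_eq_contiguousMinorOver {r c : Fin y → ZMod n}
    (hr : ∀ i, r i = ((a + (i : ℕ) : ℤ) : ZMod n))
    (hc : ∀ j, c j = ((b + y - 1 - (j : ℕ) : ℤ) : ZMod n)) :
    (M.submatrix r c).det = contiguousMinorOver M a b y := by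
  rw [funext hr, funext hc]
  rfl

theorem contiguousMinorOver_add_right (a b : ℤ) (y : ℕ) :
    contiguousMinorOver M a (b + n) y = contiguousMinorOver M a b y := by
  simp [contiguousMinorOver]

theorem contiguousMinorOver_octahedron (a b : ℤ) (y : ℕ) :
    contiguousMinorOver M a (b + 1) (y + 1) * contiguousMinorOver M (a + 1) b (y + 1) =
      contiguousMinorOver M a b (y + 2) * contiguousMinorOver M (a + 1) (b + 1) y +
        contiguousMinorOver M (a + 1) (b + 1) (y + 1) * contiguousMinorOver M a b (y + 1) := by
  have h := desnanot_jacobi M (fun i : Fin (y + 2) ↦ ((a + (i : ℕ) : ℤ) : ZMod n))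
    fun j : Fin (y + 2) ↦ ((b + (y + 2 : ℕ) - 1 - (j : ℕ) : ℤ) : ZMod n)
  rw [det_submatrix_eq_contiguousMinorOver M (a := a) (b := b),
    det_submatrix_eq_contiguousMinorOver M (a := a + 1) (b := b + 1),
    det_submatrix_eq_contiguousMinorOver M (a := a) (b := b + 1),
    det_submatrix_eq_contiguousMinorOver M (a := a + 1) (b := b),
    det_submatrix_eq_contiguousMinorOver M (a := a) (b := b),
    det_submatrix_eq_contiguousMinorOver M (a := a + 1) (b := b + 1)] at h
  · linear_combination -h
  all_goals
    intro i
    simp only [Fin.init_def, Fin.tail_def, Fin.val_castSucc, Fin.val_succ] <;> push_cast <;> ring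

theorem centralMinorOver_eq_of_even [NeZero n] (hx : x = 2 * a + y)
    (hb : b = a + ((n - 1) / 2 : ℕ)) :
    centralMinorOver M x y = contiguousMinorOver M a b y := by
  have := NeZero.pos n
  rw [centralMinorOver]
  congr 1 <;> grind

theorem centralMinorOver_eq_of_odd [NeZero n] (hx : x = 2 * a + 1 + y)
    (hb : b = a + ((n - 1) / 2 + 1 : ℕ)) :
    centralMinorOver M x y = contiguousMinorOver M a b y := by
  have := NeZero.pos n
  rw [centralMinorOver]
  congr 1 <;> grind

theorem isPositiveRational_contiguousMinorOver_zero (a b : ℤ) :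
    IsPositiveRational (smallCentralMinors M) (contiguousMinorOver M a b 0) := by
  rw [contiguousMinorOver, det_isEmpty]
  exact .one _

variable {M}

theorem contiguousMinorOver_comm (hM : M.IsSymm) (a b : ℤ) (y : ℕ) :
    contiguousMinorOver M a b y = contiguousMinorOver M b a y := by
  rw [contiguousMinorOver, ← det_transpose, ← det_submatrix_equiv_self Fin.revPerm]
  refine congrArg det (Matrix.ext fun i j ↦ (hM.apply _ _).trans ?_)
  simp only [of_apply, Fin.revPerm_apply]
  congr 2 <;> grind

theorem contiguousMinorOver_swap (hM : M.IsSymm) (a b : ℤ) (y : ℕ) :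
    contiguousMinorOver M a b y = contiguousMinorOver M b (a + n) y := by
  rw [contiguousMinorOver_comm hM, contiguousMinorOver_add_right]

theorem centralMinorOver_add_card [NeZero n] (hM : M.IsSymm) (hxy : Odd n ∨ Odd (x + y)) :
    centralMinorOver M (x + n) y = centralMinorOver M x y := by
  have := NeZero.pos n
  obtain ⟨a, hx | hx⟩ := Int.even_or_odd' (x - y)
  · rw [centralMinorOver_eq_of_even M (x := x) (a := a) (by lia) rfl, contiguousMinorOver_swap hM]
    exact centralMinorOver_eq_of_odd M (by grind) (by grind)
  · rw [centralMinorOver_eq_of_odd M (x := x) (a := a) (by lia) rfl, contiguousMinorOver_swap hM]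
    obtain hn | hn := Nat.even_or_odd n
    · exact centralMinorOver_eq_of_odd M (by grind) (by grind)
    · exact centralMinorOver_eq_of_even M (by grind) (by grind)

/-- For even `n` the central minors `CM_{x,y}` with `x + y` even are not `n`-periodic in `x`; this
relation, whose right-hand side only involves those with `x + y` odd, replaces periodicity. -/
theorem centralMinorOver_mul_add_card [NeZero n] (hM : M.IsSymm) (hn : Even n)
    (hxy : Odd (x + y)) :
    centralMinorOver M (x + n) (y + 1) * centralMinorOver M x (y + 1) =
      centralMinorOver M x (y + 2) * centralMinorOver M x y +
        centralMinorOver M (x + 1) (y + 1) * centralMinorOver M (x - 1) (y + 1) := by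
  have := NeZero.pos n
  obtain ⟨a, rfl⟩ : ∃ a, x = 2 * a + y + 1 := by
    obtain ⟨a, ha⟩ := hxy
    exact ⟨a - y, by lia⟩
  have hshift : centralMinorOver M (2 * a + y + 1 + n) (y + 1) =
      contiguousMinorOver M (a - 1) (a + ((n - 1) / 2 : ℕ) + 1) (y + 1) := by
    rw [contiguousMinorOver_swap hM]
    exact centralMinorOver_eq_of_even M (by grind) (by grind)
  have hoctahedron := contiguousMinorOver_octahedron M (a - 1) (a + ((n - 1) / 2 : ℕ)) y
  rw [sub_add_cancel] at hoctahedron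
  rw [hshift, centralMinorOver_eq_of_even M (x := 2 * a + y + 1) (y := y + 1) (a := a) (by lia) rfl]
  rw [centralMinorOver_eq_of_odd M, centralMinorOver_eq_of_odd M, centralMinorOver_eq_of_odd M,
    centralMinorOver_eq_of_odd M]
  · exact hoctahedron
  all_goals lia

theorem forall_of_forall_mem_Icc_of_forall_add_iff [NeZero n] {P : ℤ → Prop}
    (hadd : ∀ x, P (x + n) ↔ P x) (hIcc : ∀ x ∈ Set.Icc 1 (n : ℤ), P x) (x : ℤ) : P x := by
  have hper : Function.Periodic P n := fun x ↦ propext (hadd x)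
  obtain ⟨x', hx', heq⟩ := hper.exists_mem_Ioc (by exact_mod_cast NeZero.pos n) x 0
  exact heq.mpr (hIcc x' ⟨hx'.1, by simpa only [zero_add] using hx'.2⟩)

theorem isPositiveRational_centralMinorOver_of_mem_Icc (hx : x ∈ Set.Icc 1 (n : ℤ))
    (hy : 2 * y < n ∨ 2 * y = n ∧ Odd (x + y)) :
    IsPositiveRational (smallCentralMinors M) (centralMinorOver M x y) := by
  obtain rfl | hy0 := Nat.eq_zero_or_pos y
  · exact isPositiveRational_contiguousMinorOver_zero M _ _
  · exact .of_apply (smallCentralMinors M)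
      ⟨(x, y), hx.1, hx.2, hy.imp_left (And.intro hy0)⟩

theorem isPositiveRational_centralMinorOver_of_odd [NeZero n] (hM : M.IsSymm) (hy : 2 * y ≤ n)
    (hxy : Odd n ∨ Odd (x + y)) :
    IsPositiveRational (smallCentralMinors M) (centralMinorOver M x y) := by
  refine forall_of_forall_mem_Icc_of_forall_add_iff (n := n)
    (P := fun x ↦ (Odd n ∨ Odd (x + y)) →
      IsPositiveRational (smallCentralMinors M) (centralMinorOver M x y))
    (fun x ↦ ?_) (fun x hx hxy ↦ ?_) x hxy
  · have hparity : (Odd n ∨ Odd (x + n + y)) ↔ (Odd n ∨ Odd (x + y)) := by grind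
    refine (imp_congr_left hparity).trans (imp_congr_right fun hxy ↦ ?_)
    rw [centralMinorOver_add_card hM hxy]
  · exact isPositiveRational_centralMinorOver_of_mem_Icc hx (by grind)

theorem isPositiveRational_centralMinorOver_add_card_iff [NeZero n] (hM : M.IsSymm)
    (hy : 2 * y < n) :
    IsPositiveRational (smallCentralMinors M) (centralMinorOver M (x + n) y) ↔
      IsPositiveRational (smallCentralMinors M) (centralMinorOver M x y) := by
  by_cases hxy : Odd n ∨ Odd (x + y)
  · rw [centralMinorOver_add_card hM hxy]
  cases y with
  | zero =>
    exact iff_of_true (isPositiveRational_contiguousMinorOver_zero M _ _)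
      (isPositiveRational_contiguousMinorOver_zero M _ _)
  | succ y =>
    have hodd (x' : ℤ) (y' : ℕ) (hxy' : Odd (x' + y')) (hy' : y' ≤ y + 2) :
        IsPositiveRational (smallCentralMinors M) (centralMinorOver M x' y') :=
      isPositiveRational_centralMinorOver_of_odd hM (by grind) (.inr hxy')
    have hprod := centralMinorOver_mul_add_card (x := x) (y := y) hM (by grind) (by grind)
    have hsum := ((hodd x (y + 2) (by grind) le_rfl).mul (hodd x y (by grind) (by lia))).add
      ((hodd (x + 1) (y + 1) (by grind) (by lia)).mul
        (hodd (x - 1) (y + 1) (by grind) (by lia)))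
    exact ⟨fun h ↦ hsum.of_mul_eq h (by rw [mul_comm, hprod]), fun h ↦ hsum.of_mul_eq h hprod⟩

theorem isPositiveRational_centralMinorOver [NeZero n] (hM : M.IsSymm)
    (hy : 2 * y < n ∨ 2 * y = n ∧ Odd (x + y)) :
    IsPositiveRational (smallCentralMinors M) (centralMinorOver M x y) := by
  obtain hy | ⟨hy, hxy⟩ := hy
  · exact forall_of_forall_mem_Icc_of_forall_add_iff (n := n)
      (fun _ ↦ isPositiveRational_centralMinorOver_add_card_iff hM hy)
      (fun _ hx ↦ isPositiveRational_centralMinorOver_of_mem_Icc hx (.inl hy)) x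
  · exact isPositiveRational_centralMinorOver_of_odd hM hy.le (.inr hxy)

/-- Every contiguous minor of `M` whose row interval starts `d` places before its column interval,
the two intervals being disjoint, is a positive rational function of the small central minors. -/
def HasPositiveRationalContiguousMinors (M : Matrix (ZMod n) (ZMod n) R) (d : ℕ) : Prop :=
  ∀ (a : ℤ) (y : ℕ), y ≤ d → d + y ≤ n →
    IsPositiveRational (smallCentralMinors M) (contiguousMinorOver M a (a + d) y)

namespace HasPositiveRationalContiguousMinors

theorem half [NeZero n] (hM : M.IsSymm) :
    HasPositiveRationalContiguousMinors M ((n - 1) / 2) := by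
  intro a y hy _
  have := NeZero.pos n
  rw [← centralMinorOver_eq_of_even M rfl rfl]
  exact isPositiveRational_centralMinorOver hM (.inl (by lia))

theorem half_add_one [NeZero n] (hM : M.IsSymm) :
    HasPositiveRationalContiguousMinors M ((n - 1) / 2 + 1) := by
  intro a y _ hy
  rw [← centralMinorOver_eq_of_odd M rfl rfl]
  exact isPositiveRational_centralMinorOver hM (by grind)

theorem add_two (hd : n ≤ 2 * d + 2) (h : HasPositiveRationalContiguousMinors M d)
    (h' : HasPositiveRationalContiguousMinors M (d + 1)) :
    HasPositiveRationalContiguousMinors M (d + 2) := by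
  intro a y hyd hyn
  cases y with
  | zero => exact isPositiveRational_contiguousMinorOver_zero M _ _
  | succ y =>
    have hoctahedron := contiguousMinorOver_octahedron M a (a + (d + 1 : ℕ)) y
    have hleft (y') (hy' : y' ≤ y + 2) := h' a y' (by lia) (by lia)
    have hright (y') (hy' : y' ≤ y + 2) := h' (a + 1) y' (by lia) (by lia)
    have hinner := h (a + 1) (y + 1) (by lia) (by lia)
    rw [show a + 1 + (d : ℤ) = a + (d + 1 : ℕ) by lia] at hinner
    simp only [add_right_comm a 1] at hright
    rw [show a + ((d + 2 : ℕ) : ℤ) = a + (d + 1 : ℕ) + 1 by lia]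
    exact .of_mul_eq (.add (.mul (hleft _ le_rfl) (hright y (by lia)))
      (.mul (hright _ (by lia)) (hleft _ (by lia)))) hinner hoctahedron

theorem half_add [NeZero n] (hM : M.IsSymm) :
    ∀ e, HasPositiveRationalContiguousMinors M ((n - 1) / 2 + e)
  | 0 => half hM
  | 1 => half_add_one hM
  | e + 2 => add_two (by lia) (half_add hM e) (half_add hM (e + 1))

end HasPositiveRationalContiguousMinors

theorem isPositiveRational_contiguousMinorOver [NeZero n] (hM : M.IsSymm) (hab : a + y ≤ b)
    (hba : b + y ≤ a + n) :
    IsPositiveRational (smallCentralMinors M) (contiguousMinorOver M a b y) := by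
  have far (a b : ℤ) (hab : a + y ≤ b) (hba : b + y ≤ a + n) (hd : ((n - 1) / 2 : ℕ) ≤ b - a) :
      IsPositiveRational (smallCentralMinors M) (contiguousMinorOver M a b y) := by
    obtain ⟨e, he⟩ := Int.le.dest hd
    obtain rfl : b = a + ((n - 1) / 2 + e : ℕ) := by lia
    exact HasPositiveRationalContiguousMinors.half_add hM e a y (by lia) (by lia)
  obtain hd | hd := le_total (((n - 1) / 2 : ℕ) : ℤ) (b - a)
  · exact far a b hab hba hd
  · rw [contiguousMinorOver_swap hM]
    exact far b (a + n) hba (by lia) (by lia)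

end ContiguousMinors

section Noninterlaced

open Matrix

variable {n k : ℕ}

theorem isPositiveRational_det_of_noninterlaced {R : Type*} [CommRing R] [NeZero n]
    {M : Matrix (ZMod n) (ZMod n) R} (hM : M.IsSymm) {a b : Fin k → ℤ}
    (ha : StrictMono a) (hb : StrictAnti b) (hab : ∀ i j, a i < b j)
    (hba : ∀ i j, b j < a i + n) :
    IsPositiveRational (smallCentralMinors M)
      (of fun i j ↦ M (a i : ZMod n) (b j : ZMod n)).det := by
  cases k with
  | zero =>
    rw [det_isEmpty]
    exact .one _
  | succ m =>
    let X : Matrix ℤ ℤ R := of fun u w ↦ M (u : ZMod n) ((-w : ℤ) : ZMod n)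
    have hminors : HasPositiveRationalMinors (smallCentralMinors M) X
        (Set.Icc (a 0) (a (Fin.last m))) (Set.Icc (-b 0) (-b (Fin.last m))) (m + 1) := by
      refine .of_consecutive (fun y r c hr hc ↦ ?_) _
      have hsolid : (X.submatrix (fun i : Fin y ↦ r + (i : ℕ)) fun j : Fin y ↦ c + (j : ℕ)).det =
          contiguousMinorOver M r (1 - y - c) y :=
        det_submatrix_eq_contiguousMinorOver M (fun _ ↦ rfl) fun j ↦ congrArg _ (by ring)
      rw [hsolid]
      cases y with
      | zero => exact isPositiveRational_contiguousMinorOver_zero M _ _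
      | succ y =>
        have hr_first := hr 0
        have hr_last := hr (Fin.last y)
        have hc_first := hc 0
        have hc_last := hc (Fin.last y)
        have hab_last := hab (Fin.last m) (Fin.last m)
        have hba_first := hba 0 0
        simp only [Fin.val_zero, Fin.val_last, Set.mem_Icc] at hr_first hr_last hc_first hc_last
        exact isPositiveRational_contiguousMinorOver hM (by lia) (by lia)
    have hdet := hminors (c := fun j ↦ -b j) ha hb.neg
      (fun i ↦ ⟨ha.monotone (Fin.zero_le i), ha.monotone (Fin.le_last i)⟩)
      fun j ↦ ⟨neg_le_neg (hb.antitone (Fin.zero_le j)), neg_le_neg (hb.antitone (Fin.le_last j))⟩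
    simpa only [X, submatrix, of_apply, neg_neg] using hdet

/-- The generic symmetric matrix: the entries on and above the diagonal are independent variables,
so identities between its minors specialise to every symmetric matrix. -/
noncomputable def genericSymmMatrix (ι : Type*) : Matrix ι ι (MvPolynomial (Sym2 ι) ℤ) :=
  of fun i j ↦ MvPolynomial.X s(i, j)

theorem genericSymmMatrix_isSymm (ι : Type*) : (genericSymmMatrix ι).IsSymm :=
  IsSymm.ext fun _ _ ↦ congrArg MvPolynomial.X Sym2.eq_swap

theorem exists_map_genericSymmMatrix_eq {ι R : Type*} [CommRing R] {M : Matrix ι ι R}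
    (hM : M.IsSymm) : ∃ φ : MvPolynomial (Sym2 ι) ℤ →+* R, (genericSymmMatrix ι).map φ = M :=
  ⟨MvPolynomial.eval₂Hom (Int.castRingHom R) (Sym2.lift ⟨M, fun i j ↦ hM.apply j i⟩),
    Matrix.ext fun _ _ ↦ MvPolynomial.eval₂Hom_X' _ _ _⟩

theorem aeval_smallCentralMinors_map {R S : Type*} [CommRing R] [CommRing S] (φ : R →+* S)
    (M : Matrix (ZMod n) (ZMod n) R) (p : MvPolynomial (SmallIdxSym n) ℕ) :
    MvPolynomial.aeval (smallCentralMinors (M.map φ)) p =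
      φ (MvPolynomial.aeval (smallCentralMinors M) p) := by
  have hminors : smallCentralMinors (M.map φ) = fun s ↦ φ.toNatAlgHom (smallCentralMinors M s) :=
    funext fun _ ↦ (φ.map_det _).symm
  rw [hminors, ← MvPolynomial.comp_aeval_apply]
  rfl

theorem symmetric_noninterlaced_minor_positive_rational_general.{u} (n k : ℕ) [NeZero n]
    (a b : Fin k → Fin n) (t : ℕ)
    (hg : StrictMono (fun i : Fin k ↦ ((a i : ℕ) + t) % n))
    (hh : StrictAnti (fun i : Fin k ↦ ((b i : ℕ) + t) % n))
    (hgh : ∀ i j : Fin k, ((a i : ℕ) + t) % n < ((b j : ℕ) + t) % n) :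
    ∃ p q : MvPolynomial (SmallIdxSym n) ℕ, p ≠ 0 ∧ q ≠ 0 ∧
      ∀ (R : Type u) [CommRing R] (M : Matrix (ZMod n) (ZMod n) R), M.IsSymm →
        (of fun i j : Fin k ↦ M ((a i : ℕ) : ZMod n) ((b j : ℕ) : ZMod n)).det *
            MvPolynomial.aeval (smallCentralMinors M) q =
          MvPolynomial.aeval (smallCentralMinors M) p := by
  let unroll (i : Fin n) : ℤ := (((i : ℕ) + t) % n : ℕ) - t
  have cast_unroll (i : Fin n) : (unroll i : ZMod n) = ((i : ℕ) : ZMod n) := by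
    simp only [unroll, Int.cast_sub, Int.cast_natCast, ZMod.natCast_mod, Nat.cast_add,
      add_sub_cancel_right]
  have unroll_lt (i j : Fin n) : unroll i < unroll j + n := by
    have hlt : (((i + t) % n : ℕ) : ℤ) < n := Int.ofNat_lt.2 (Nat.mod_lt _ (NeZero.pos n))
    have hnonneg : 0 ≤ (((j + t) % n : ℕ) : ℤ) := Int.natCast_nonneg _
    simp only [unroll]
    linarith only [hlt, hnonneg]
  obtain ⟨p, q, hp, hq, hpq⟩ := isPositiveRational_det_of_noninterlaced (n := n)
    (genericSymmMatrix_isSymm _) (a := unroll ∘ a) (b := unroll ∘ b)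
    (fun i j hij ↦ sub_lt_sub_right (Int.ofNat_lt.2 (hg hij)) _)
    (fun i j hij ↦ sub_lt_sub_right (Int.ofNat_lt.2 (hh hij)) _)
    (fun i j ↦ sub_lt_sub_right (Int.ofNat_lt.2 (hgh i j)) _) fun _ _ ↦ unroll_lt _ _
  refine ⟨p, q, hp, hq, fun R _ M hM ↦ ?_⟩
  obtain ⟨φ, rfl⟩ := exists_map_genericSymmMatrix_eq hM
  rw [aeval_smallCentralMinors_map, aeval_smallCentralMinors_map, ← hpq, map_mul, φ.map_det]
  simp only [Function.comp_apply, cast_unroll]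
  rfl

end Noninterlaced

/-- For symmetric matrices, any noninterlaced minor is a positive rational function of the
small central minors with first index `x ∈ {1,…,n}` only.  The noninterlaced pair
`A = {a₁,…,a_k}`, `B = {b₁,…,b_k}` is encoded by the hypothesis that after a cyclic
rotation by `t`, the sequence `a₁, …, a_k, b_k, …, b₁` is strictly increasing. -/
theorem symmetric_noninterlaced_minor_positive_rational (n k : ℕ) [NeZero n]
    (a b : Fin k → Fin n) (t : ℕ)
    (hg : StrictMono (fun i : Fin k => ((a i : ℕ) + t) % n))
    (hh : StrictAnti (fun i : Fin k => ((b i : ℕ) + t) % n))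
    (hgh : ∀ i j : Fin k, ((a i : ℕ) + t) % n < ((b j : ℕ) + t) % n) :
    ∃ p q : MvPolynomial (SmallIdxSym n) ℝ,
      (∀ m : (SmallIdxSym n) →₀ ℕ, 0 ≤ MvPolynomial.coeff m p) ∧
      (∀ m : (SmallIdxSym n) →₀ ℕ, 0 ≤ MvPolynomial.coeff m q) ∧
      q ≠ 0 ∧
      ∀ M : Matrix (ZMod n) (ZMod n) ℝ, M.IsSymm →
        Matrix.det (Matrix.of fun i j : Fin k =>
            M (((a i : ℕ) : ZMod n)) (((b j : ℕ) : ZMod n))) *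
          MvPolynomial.eval (fun s : SmallIdxSym n => centralMinor n M s.1.1 s.1.2) q =
          MvPolynomial.eval (fun s : SmallIdxSym n => centralMinor n M s.1.1 s.1.2) p := by
  obtain ⟨p, q, -, hq, hpq⟩ :=
    symmetric_noninterlaced_minor_positive_rational_general n k a b t hg hh hgh
  refine ⟨p.map (Nat.castRingHom ℝ), q.map (Nat.castRingHom ℝ), fun m ↦ ?_, fun m ↦ ?_, ?_,
    fun M hM ↦ ?_⟩
  · rw [MvPolynomial.coeff_map]
    exact Nat.cast_nonneg _
  · rw [MvPolynomial.coeff_map]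
    exact Nat.cast_nonneg _
  · exact (map_ne_zero_iff _ (MvPolynomial.map_injective _ Nat.cast_injective)).2 hq
  · rw [MvPolynomial.eval_map, MvPolynomial.eval_map]
    exact hpq ℝ M hM
end
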